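/- arXiv:1710.02893 — 2 statements merged into one kernel-verified Lean document; each statement's English description precedes it below -/
import Mathlib

section
/- Let f be a germ of holomorphic function at 0 ∈ ℂⁿ, n ≥ 2, with f(z) = z₁ ⋯ zₙ + O(|z|^{n+1}), and let M = {Re(f) = 0}. Suppose f is right equivalent to the product of all coordinates, i.e., there exists a germ of biholomorphism σ : (ℂⁿ,0) → (ℂⁿ,0) with f ∘ σ⁻¹(z) = z₁ ⋯ zₙ. Then there exist a germ of volume-preserving biholomorphism Φ : (ℂⁿ,0) → (ℂⁿ,0) and a germ of automorphism Ψ : (ℂ,0) → (ℂ,0) such that Φ(M) = {Re(Ψ(z₁ ⋯ zₙ)) = 0} as germs of sets at 0, and Ψ is uniquely determined by f up to a sign. -/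
open Filter Topology

/-- Wirtinger derivative ∂/∂z_j of a (complex-valued) function at `p`:
`(1/2)(∂F/∂x_j − i ∂F/∂y_j)`. -/
noncomputable def wirtZ {n : ℕ} (F : (Fin n → ℂ) → ℂ) (j : Fin n) (p : Fin n → ℂ) : ℂ :=
  (fderiv ℝ F p (Pi.single j 1) - Complex.I * fderiv ℝ F p (Pi.single j Complex.I)) / 2

/-- Wirtinger derivative ∂/∂z̄_j of a (complex-valued) function at `p`:
`(1/2)(∂F/∂x_j + i ∂F/∂y_j)`. -/
noncomputable def wirtZbar {n : ℕ} (F : (Fin n → ℂ) → ℂ) (j : Fin n) (p : Fin n → ℂ) : ℂ :=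
  (fderiv ℝ F p (Pi.single j 1) + Complex.I * fderiv ℝ F p (Pi.single j Complex.I)) / 2

/-- The germ `M = {F = 0}` at `0` is Levi-flat: for every point `p` of `M* = M \ Sing(M)`
near `0` and every `v` with `Σ_j F_{z_j}(p) v_j = 0` one has
`Σ_{i,j} F_{z_i z̄_j}(p) v_i conj(v_j) = 0`. -/
def LeviFlatGerm {n : ℕ} (F : (Fin n → ℂ) → ℝ) : Prop :=
  ∀ᶠ p in 𝓝 (0 : Fin n → ℂ), F p = 0 → fderiv ℝ F p ≠ 0 →
    ∀ v : Fin n → ℂ,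
      (∑ j, wirtZ (fun z => ((F z : ℝ) : ℂ)) j p * v j) = 0 →
      (∑ i, ∑ j, wirtZbar (wirtZ (fun z => ((F z : ℝ) : ℂ)) i) j p * v i * (starRingEnd ℂ) (v j)) = 0

/-- `F` is irreducible in the ring of germs at `0` of real-valued real-analytic functions:
in any factorization `F = g·h` one of the factors is a unit (i.e. does not vanish at `0`). -/
def IrreducibleRGerm {n : ℕ} (F : (Fin n → ℂ) → ℝ) : Prop :=
  ∀ g h : (Fin n → ℂ) → ℝ, AnalyticAt ℝ g 0 → AnalyticAt ℝ h 0 →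
    (∀ᶠ z in 𝓝 (0 : Fin n → ℂ), F z = g z * h z) → g 0 ≠ 0 ∨ h 0 ≠ 0

/-- `φ` is a germ of biholomorphism `(ℂⁿ,0) → (ℂⁿ,0)` with local inverse `ι`. -/
def IsGermBiholo {n : ℕ} (φ ι : (Fin n → ℂ) → (Fin n → ℂ)) : Prop :=
  AnalyticAt ℂ φ 0 ∧ AnalyticAt ℂ ι 0 ∧ φ 0 = 0 ∧ ι 0 = 0 ∧
  (∀ᶠ z in 𝓝 (0 : Fin n → ℂ), ι (φ z) = z) ∧ (∀ᶠ z in 𝓝 (0 : Fin n → ℂ), φ (ι z) = z)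

/-- `φ` is volume-preserving (isochore): the determinant of its complex Jacobian is
identically `1` near `0`. -/
def IsVolumePreserving {n : ℕ} (φ : (Fin n → ℂ) → (Fin n → ℂ)) : Prop :=
  ∀ᶠ z in 𝓝 (0 : Fin n → ℂ), LinearMap.det ((fderiv ℂ φ z).toLinearMap) = 1

/-- `ψ` is a germ of automorphism of `(ℂ,0)`. -/
def IsGermAuto (ψ : ℂ → ℂ) : Prop :=
  AnalyticAt ℂ ψ 0 ∧ ψ 0 = 0 ∧ deriv ψ 0 ≠ 0

/-!
Write `p z = ∏ i, z i`. The proof normalizes volume densities relative to `p`, using the fields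
`z_k ∂/∂z_k - z_N ∂/∂z_N`: they are tangent to the fibres of `p`, divergence free, and generate
commuting circle actions.

*Existence.* Let `g` be the Jacobian determinant of `σ⁻¹`. If `χ` has Jacobian determinant `g` and
`p ∘ χ = λ ∘ p`, then `Φ = χ ∘ σ` is volume-preserving and `f ∘ Φ⁻¹ = Ψ ∘ p` with `Ψ = λ⁻¹`. Such
a `χ` is a composition of two kinds of maps. The difference of a function and its average along
a circle action is a derivative along the corresponding field; hence moving each point along the
flow for a suitable time, depending on the point, replaces a nonvanishing density by its average
without changing `p`. After one such step for each field, the density is invariant under all the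
circle actions, hence of the form `a ∘ p`. Finally, the rescaling of one coordinate that turns `p`
into `λ ∘ p` has Jacobian determinant `λ' ∘ p`, so one takes for `λ` a primitive of `a`.

*Uniqueness.* Two normal forms of `f` differ by a volume-preserving `χ` with `p ∘ χ = λ ∘ p`. Such
a `χ` permutes the coordinate hyperplanes; up to a permutation of the coordinates it is
`z ↦ (z_i e^{v_i(z)})_i`, with constant Jacobian determinant `±1`. Composing with a flow map as
above does not change the average of the Jacobian determinant, so undoing the factors `e^{v_k}`,
`k ≠ N`, one after another shows that the average over the whole torus, which is `±1`, equals
`λ' ∘ p`. Hence `λ t = ± t`.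
-/

/-! ### Germs of analytic functions -/

section ParametricIntegral
variable {E F : Type*} [NormedAddCommGroup E] [NormedSpace ℂ E]
  [NormedAddCommGroup F] [NormedSpace ℂ F]

theorem continuous_compContinuousLinearMap_family {X : Type*} [TopologicalSpace X]
    (p : FormalMultilinearSeries ℂ E F) (m : ℕ) {R : X → E →L[ℂ] E} (hR : Continuous R) :
    Continuous fun θ => p.compContinuousLinearMap (R θ) m :=
  ((ContinuousMultilinearMap.compContinuousLinearMapContinuousMultilinear ℂ
    (fun _ : Fin m => E) (fun _ : Fin m => E) F).cont.comp
      (continuous_pi fun _ => hR)).clm_apply continuous_const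

theorem norm_compContinuousLinearMap_le_of_norm_le_one (p : FormalMultilinearSeries ℂ E F) (m : ℕ)
    {A : E →L[ℂ] E} (hA : ‖A‖ ≤ 1) : ‖p.compContinuousLinearMap A m‖ ≤ ‖p m‖ :=
  (ContinuousMultilinearMap.norm_compContinuousLinearMap_le _ _).trans <|
    mul_le_of_le_one_right (norm_nonneg _) <|
      Finset.prod_le_one (fun _ _ => norm_nonneg _) fun _ _ => hA

/-- The power series of `z ↦ ∫ θ in a..b, w θ • G (R θ z)`, where `p` is the power series of `G`
at the origin: the pulled back series is integrated term by term. -/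
noncomputable def integralSeries (a b : ℝ) (w : ℝ → ℂ) (R : ℝ → E →L[ℂ] E)
    (p : FormalMultilinearSeries ℂ E F) : FormalMultilinearSeries ℂ E F := fun m =>
  ∫ θ in a..b, w θ • p.compContinuousLinearMap (R θ) m

variable {a b : ℝ} {w : ℝ → ℂ} {R : ℝ → E →L[ℂ] E}

theorem integralSeries_apply [CompleteSpace F] (hw : Continuous w) (hR : Continuous R)
    (p : FormalMultilinearSeries ℂ E F) (m : ℕ) (y : Fin m → E) :
    integralSeries a b w R p m y = ∫ θ in a..b, w θ • p m (fun i => R θ (y i)) :=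
  ((ContinuousMultilinearMap.apply ℂ (fun _ : Fin m => E) F y).intervalIntegral_comp_comm
    ((hw.smul (continuous_compContinuousLinearMap_family p m hR)).intervalIntegrable a b)).symm

theorem norm_integralSeries_le {C : ℝ} (hwC : ∀ θ ∈ Set.uIoc a b, ‖w θ‖ ≤ C)
    (hR1 : ∀ θ ∈ Set.uIoc a b, ‖R θ‖ ≤ 1) (p : FormalMultilinearSeries ℂ E F) (m : ℕ) :
    ‖integralSeries a b w R p m‖ ≤ C * ‖p m‖ * |b - a| := by
  refine intervalIntegral.norm_integral_le_of_norm_le_const fun θ hθ => ?_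
  rw [norm_smul]
  exact mul_le_mul (hwC θ hθ) (norm_compContinuousLinearMap_le_of_norm_le_one p m (hR1 θ hθ))
    (norm_nonneg _) ((norm_nonneg _).trans (hwC θ hθ))

theorem radius_le_radius_integralSeries {C : ℝ} (hwC : ∀ θ ∈ Set.uIoc a b, ‖w θ‖ ≤ C)
    (hR1 : ∀ θ ∈ Set.uIoc a b, ‖R θ‖ ≤ 1) (p : FormalMultilinearSeries ℂ E F) :
    p.radius ≤ (integralSeries a b w R p).radius := by
  refine ENNReal.le_of_forall_nnreal_lt fun s hs => ?_
  obtain ⟨K, -, hK⟩ := p.norm_mul_pow_le_of_lt_radius hs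
  refine FormalMultilinearSeries.le_radius_of_bound _ (|C| * |b - a| * K) fun m => ?_
  calc ‖integralSeries a b w R p m‖ * (s : ℝ) ^ m
      ≤ (C * ‖p m‖ * |b - a|) * (s : ℝ) ^ m := by
        gcongr; exact norm_integralSeries_le hwC hR1 p m
    _ ≤ (|C| * ‖p m‖ * |b - a|) * (s : ℝ) ^ m := by gcongr; exact le_abs_self C
    _ = |C| * |b - a| * (‖p m‖ * (s : ℝ) ^ m) := by ring
    _ ≤ |C| * |b - a| * K := by gcongr; exact hK m

theorem hasSum_intervalIntegral_of_hasFPowerSeriesOnBall {C : ℝ}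
    (hwC : ∀ θ ∈ Set.uIoc a b, ‖w θ‖ ≤ C) (hw : Continuous w) (hR : Continuous R)
    (hR1 : ∀ θ ∈ Set.uIoc a b, ‖R θ‖ ≤ 1) {G : E → F} {p : FormalMultilinearSeries ℂ E F}
    {r : ENNReal} (hp : HasFPowerSeriesOnBall G p 0 r) {y : E} (hy : ‖y‖ₑ < r) :
    HasSum (fun m => ∫ θ in a..b, w θ • p m (fun _ => R θ y))
      (∫ θ in a..b, w θ • G (R θ y)) := by
  have norm_R_le : ∀ θ ∈ Set.uIoc a b, ‖R θ y‖ ≤ ‖y‖ := fun θ hθ =>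
    ((R θ).le_opNorm y).trans (mul_le_of_le_one_left (norm_nonneg _) (hR1 θ hθ))
  have summable_bound : Summable fun m => ‖p m‖ * ‖y‖ ^ m := by
    simpa using p.summable_norm_mul_pow (r := ‖y‖₊) (hy.trans_le hp.r_le)
  refine intervalIntegral.hasSum_integral_of_dominated_convergence
    (fun m _ => |C| * (‖p m‖ * ‖y‖ ^ m)) (fun m => Continuous.aestronglyMeasurable ?_)
    (fun m => .of_forall fun θ hθ => ?_) (.of_forall fun θ _ => summable_bound.mul_left _)
    intervalIntegrable_const (.of_forall fun θ hθ => ?_)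
  · exact hw.smul ((p m).cont.comp (continuous_pi fun _ => hR.clm_apply continuous_const))
  · rw [norm_smul]
    refine mul_le_mul ((hwC θ hθ).trans (le_abs_self C)) ?_ (norm_nonneg _) (abs_nonneg _)
    refine ((p m).le_opNorm _).trans ?_
    rw [Finset.prod_const, Finset.card_univ, Fintype.card_fin]
    gcongr
    exact norm_R_le θ hθ
  · have : R θ y ∈ Metric.eball (0 : E) r := by
      simpa using (enorm_le_iff_norm_le.2 (norm_R_le θ hθ)).trans_lt hy
    simpa using (hp.hasSum this).const_smul (w θ)

theorem analyticAt_intervalIntegral_smul_comp [CompleteSpace F] (hw : Continuous w)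
    (hR : Continuous R) (hR1 : ∀ θ ∈ Set.uIoc a b, ‖R θ‖ ≤ 1) {G : E → F}
    (hG : AnalyticAt ℂ G 0) :
    AnalyticAt ℂ (fun z => ∫ θ in a..b, w θ • G (R θ z)) 0 := by
  obtain ⟨p, r, hp⟩ := hG
  obtain ⟨C, hC⟩ := isCompact_uIcc.exists_bound_of_continuousOn (s := Set.uIcc a b) hw.continuousOn
  have hwC : ∀ θ ∈ Set.uIoc a b, ‖w θ‖ ≤ C := fun θ hθ => hC θ (Set.uIoc_subset_uIcc hθ)
  refine ⟨integralSeries a b w R p, r,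
    ⟨hp.r_le.trans (radius_le_radius_integralSeries hwC hR1 p), hp.r_pos, fun {y} hy => ?_⟩⟩
  simp only [integralSeries_apply hw hR, zero_add]
  exact hasSum_intervalIntegral_of_hasFPowerSeriesOnBall hwC hw hR hR1 hp (by simpa using hy)

end ParametricIntegral

section Germ
variable {E : Type*} [NormedAddCommGroup E] [NormedSpace ℂ E]

theorem eventually_eq_zero_or_eventually_eq_zero_of_mul {G H : E → ℂ} {x : E}
    (hG : AnalyticAt ℂ G x) (hH : AnalyticAt ℂ H x) (h : ∀ᶠ z in 𝓝 x, G z * H z = 0) :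
    (∀ᶠ z in 𝓝 x, G z = 0) ∨ (∀ᶠ z in 𝓝 x, H z = 0) := by
  obtain ⟨r, hr, hball⟩ := Metric.eventually_nhds_iff_ball.1
    (h.and (hG.eventually_analyticAt.and hH.eventually_analyticAt))
  by_cases hG0 : ∀ z ∈ Metric.ball x r, G z = 0
  · exact .inl (Metric.eventually_nhds_iff_ball.2 ⟨r, hr, hG0⟩)
  push Not at hG0
  obtain ⟨z, hz, hGz⟩ := hG0
  have H_zero_near_z : H =ᶠ[𝓝 z] 0 := by
    filter_upwards [(hball z hz).2.1.continuousAt.eventually_ne hGz,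
      Metric.isOpen_ball.mem_nhds hz] with y hGy hy
    exact (mul_eq_zero.1 (hball y hy).1).resolve_left hGy
  have H_zero_on_ball := AnalyticOnNhd.eqOn_of_preconnected_of_eventuallyEq
    (fun y hy => (hball y hy).2.2) (fun _ _ => analyticAt_const)
    (convex_ball x r).isPreconnected hz H_zero_near_z
  exact .inr (Metric.eventually_nhds_iff_ball.2 ⟨r, hr, H_zero_on_ball⟩)

theorem exists_eventually_eq_zero_of_prod {ι : Type*} {G : ι → E → ℂ} {x : E}
    (hG : ∀ i, AnalyticAt ℂ (G i) x) (s : Finset ι) (h : ∀ᶠ z in 𝓝 x, ∏ i ∈ s, G i z = 0) :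
    ∃ i ∈ s, ∀ᶠ z in 𝓝 x, G i z = 0 := by
  classical
  induction s using Finset.induction_on with
  | empty => exact absurd h.self_of_nhds (by simp)
  | insert i s hi ih =>
    simp only [Finset.prod_insert hi] at h
    rcases eventually_eq_zero_or_eventually_eq_zero_of_mul (hG i)
      (Finset.analyticAt_fun_prod _ fun j _ => hG j) h with hi0 | hs0
    · exact ⟨i, Finset.mem_insert_self i s, hi0⟩
    · obtain ⟨j, hj, hj0⟩ := ih hs0
      exact ⟨j, Finset.mem_insert_of_mem hj, hj0⟩

theorem hasDerivAt_comp_curve {G : E → ℂ} {γ : ℝ → E} {γ' : E} {t : ℝ}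
    (hG : DifferentiableAt ℂ G (γ t)) (hγ : HasDerivAt γ γ' t) :
    HasDerivAt (fun s => G (γ s)) (fderiv ℂ G (γ t) γ') t :=
  (hG.hasFDerivAt.restrictScalars ℝ).comp_hasDerivAt t hγ

theorem analyticAt_fderiv_apply {F : Type*} [NormedAddCommGroup F] [NormedSpace ℂ F]
    [CompleteSpace F] {G : E → F} {X : E → E} {x : E} (hG : AnalyticAt ℂ G x)
    (hX : AnalyticAt ℂ X x) : AnalyticAt ℂ (fun z => fderiv ℂ G z (X z)) x :=
  ((ContinuousLinearMap.id ℂ (E →L[ℂ] F)).analyticAt_bilinear _).comp₂ hG.fderiv hX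

end Germ

theorem eventuallyEq_of_eventually_coord_ne_zero {ι F : Type*} [TopologicalSpace F] [T2Space F]
    {G H : (ι → ℂ) → F} {x : ι → ℂ} (hG : ∀ᶠ z in 𝓝 x, ContinuousAt G z)
    (hH : ∀ᶠ z in 𝓝 x, ContinuousAt H z)
    (h : ∀ᶠ z in 𝓝 x, (∀ i, z i ≠ 0) → G z = H z) : G =ᶠ[𝓝 x] H := by
  obtain ⟨U, hU, hUo, hxU⟩ := eventually_nhds_iff.1 (h.and (hG.and hH))
  have dense_ne : Dense {z : ι → ℂ | ∀ i, z i ≠ 0} := by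
    simpa [Set.pi] using dense_pi (Set.univ : Set ι) fun _ _ => dense_compl_singleton (0 : ℂ)
  have eqOn : Set.EqOn G H U :=
    Set.EqOn.of_subset_closure (fun z hz => (hU z hz.1).1 hz.2)
      (fun z hz => (hU z hz).2.1.continuousWithinAt) (fun z hz => (hU z hz).2.2.continuousWithinAt)
      Set.inter_subset_left (dense_ne.open_subset_closure_inter hUo)
  exact eqOn.eventuallyEq_of_mem (hUo.mem_nhds hxU)

section Coordinates
variable {ι : Type*} [Fintype ι]

theorem analyticAt_coord (i : ι) (x : ι → ℂ) : AnalyticAt ℂ (fun z : ι → ℂ => z i) x :=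
  (ContinuousLinearMap.proj (R := ℂ) (φ := fun _ : ι => ℂ) i).analyticAt x

theorem analyticAt_prod_coord (x : ι → ℂ) : AnalyticAt ℂ (fun z : ι → ℂ => ∏ i, z i) x :=
  Finset.analyticAt_fun_prod _ fun i _ => analyticAt_coord i x

theorem tendsto_prod_coord [Nonempty ι] :
    Tendsto (fun z : ι → ℂ => ∏ i, z i) (𝓝 0) (𝓝 0) := by
  simpa using (analyticAt_prod_coord (0 : ι → ℂ)).continuousAt.tendsto

end Coordinates

section Division
variable {ι : Type*} [DecidableEq ι]

theorem update_one_mul (j : ι) (c : ℂ) (z : ι → ℂ) :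
    Function.update (1 : ι → ℂ) j c * z = Function.update z j (c * z j) := by
  ext i
  by_cases hij : i = j
  · subst hij; simp
  · simp [hij]

variable [Fintype ι]

theorem norm_update_one_le {t : ℝ} (ht : t ∈ Set.uIcc 0 1) (j : ι) :
    ‖(Function.update 1 j (t : ℂ) : ι → ℂ)‖ ≤ 1 := by
  rw [Set.uIcc_of_le zero_le_one] at ht
  refine (pi_norm_le_iff_of_nonneg zero_le_one).2 fun i => ?_
  by_cases hij : i = j
  · subst hij; simpa [abs_of_nonneg ht.1] using ht.2
  · simp [hij]

theorem hasDerivAt_update_smul (z : ι → ℂ) (j : ι) (t : ℝ) :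
    HasDerivAt (fun t : ℝ => Function.update z j (t * z j)) (z j • Pi.single j (1 : ℂ)) t := by
  have h : HasDerivAt (fun t : ℝ => (t : ℂ) * z j) (z j) t := by
    simpa using (Complex.ofRealCLM.hasDerivAt (x := t)).mul_const (z j)
  exact HasDerivAt.scomp (h := fun t : ℝ => (t : ℂ) * z j) t (hasDerivAt_update z j _) h

theorem norm_update_mul_le {t : ℝ} (ht : t ∈ Set.uIcc 0 1) (z : ι → ℂ) (j : ι) :
    ‖Function.update z j (t * z j)‖ ≤ ‖z‖ := by
  rw [← update_one_mul]
  exact (norm_mul_le _ _).trans (mul_le_of_le_one_left (norm_nonneg z) (norm_update_one_le ht j))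

theorem analyticAt_intervalIntegral_comp_update {G : (ι → ℂ) → ℂ} (hG : AnalyticAt ℂ G 0) (j : ι) :
    AnalyticAt ℂ (fun z => ∫ t in (0 : ℝ)..1, G (Function.update z j (t * z j))) 0 := by
  let contract : ℝ → (ι → ℂ) →L[ℂ] (ι → ℂ) := fun t =>
    ContinuousLinearMap.mul ℂ (ι → ℂ) (Function.update 1 j (t : ℂ))
  have contract_apply (t : ℝ) (z : ι → ℂ) : contract t z = Function.update z j (t * z j) :=
    update_one_mul j t z
  have contract_cont : Continuous contract := (ContinuousLinearMap.continuous _).comp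
    (continuous_const.update j Complex.continuous_ofReal)
  have contract_norm : ∀ t ∈ Set.uIoc (0 : ℝ) 1, ‖contract t‖ ≤ 1 := fun t ht =>
    (ContinuousLinearMap.opNorm_mul_apply_le ℂ _ _).trans
      (norm_update_one_le (Set.uIoc_subset_uIcc ht) j)
  simpa only [contract_apply, one_smul] using analyticAt_intervalIntegral_smul_comp
    (w := fun _ => 1) continuous_const contract_cont contract_norm hG

theorem eq_coord_mul_intervalIntegral {h : (ι → ℂ) → ℂ} {r : ℝ}
    (hh : AnalyticOnNhd ℂ h (Metric.ball 0 r)) {z : ι → ℂ} (hz : z ∈ Metric.ball 0 r) {j : ι}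
    (h0 : h (Function.update z j 0) = 0) :
    h z = z j * ∫ t in (0 : ℝ)..1, fderiv ℂ h (Function.update z j (t * z j)) (Pi.single j 1) := by
  let γ : ℝ → ι → ℂ := fun t => Function.update z j (t * z j)
  have hγ (t : ℝ) : HasDerivAt γ (z j • Pi.single j (1 : ℂ)) t := hasDerivAt_update_smul z j t
  have hγ_mem : ∀ t ∈ Set.uIcc (0 : ℝ) 1, γ t ∈ Metric.ball 0 r := fun t ht => by
    rw [mem_ball_zero_iff] at hz ⊢
    exact (norm_update_mul_le ht z j).trans_lt hz
  have hderiv : ∀ t ∈ Set.uIcc (0 : ℝ) 1, HasDerivAt (fun t => h (γ t))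
      (z j * fderiv ℂ h (γ t) (Pi.single j 1)) t := fun t ht => by
    simpa using hasDerivAt_comp_curve (hh _ (hγ_mem t ht)).differentiableAt (hγ t)
  have hcont : ContinuousOn (fun t => z j * fderiv ℂ h (γ t) (Pi.single j 1)) (Set.uIcc 0 1) :=
    continuousOn_const.mul fun t ht => (ContinuousAt.comp'
      (analyticAt_fderiv_apply (hh _ (hγ_mem t ht)) analyticAt_const).continuousAt
      (hγ t).continuousAt).continuousWithinAt
  have ftc := intervalIntegral.integral_eq_sub_of_hasDerivAt hderiv hcont.intervalIntegrable
  simpa [γ, h0] using ftc.symm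

theorem exists_eq_coord_mul {h : (ι → ℂ) → ℂ} (hh : AnalyticAt ℂ h 0) (j : ι)
    (h0 : ∀ᶠ z in 𝓝 (0 : ι → ℂ), h (Function.update z j 0) = 0) :
    ∃ u, AnalyticAt ℂ u 0 ∧ ∀ᶠ z in 𝓝 (0 : ι → ℂ), h z = z j * u z := by
  refine ⟨_, analyticAt_intervalIntegral_comp_update
    (analyticAt_fderiv_apply hh (analyticAt_const (v := Pi.single j 1))) j, ?_⟩
  obtain ⟨r, hr, hball⟩ := Metric.eventually_nhds_iff_ball.1 (h0.and hh.eventually_analyticAt)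
  exact Metric.eventually_nhds_iff_ball.2 ⟨r, hr, fun z hz =>
    eq_coord_mul_intervalIntegral (fun y hy => (hball y hy).2) hz (hball z hz).1⟩

end Division

theorem exists_eq_exp {E : Type*} [NormedAddCommGroup E] [NormedSpace ℂ E] {u : E → ℂ} {x : E}
    (hu : AnalyticAt ℂ u x) (h0 : u x ≠ 0) :
    ∃ w, AnalyticAt ℂ w x ∧ ∀ᶠ z in 𝓝 x, u z = Complex.exp (w z) := by
  refine ⟨fun z => Complex.log (u z / u x) + Complex.log (u x),
    ((hu.div analyticAt_const h0).clog ?_).add analyticAt_const, ?_⟩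
  · simp [h0]
  · filter_upwards [hu.continuousAt.eventually_ne h0] with z hz
    rw [Complex.exp_add, Complex.exp_log (div_ne_zero hz h0), Complex.exp_log h0,
      div_mul_cancel₀ _ h0]

/-! ### Jacobian determinants and germs of biholomorphisms -/

/-- The complex Jacobian determinant of `φ` at `z`. -/
noncomputable def jacobianDet {E : Type*} [NormedAddCommGroup E] [NormedSpace ℂ E]
    (φ : E → E) (z : E) : ℂ :=
  LinearMap.det (fderiv ℂ φ z).toLinearMap

section JacobianDet
variable {E : Type*} [NormedAddCommGroup E] [NormedSpace ℂ E] {φ χ : E → E} {z : E}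

theorem jacobianDet_id : jacobianDet (fun y : E => y) z = 1 := by
  simp [jacobianDet]

theorem jacobianDet_comp (hφ : DifferentiableAt ℂ φ (χ z)) (hχ : DifferentiableAt ℂ χ z) :
    jacobianDet (fun y => φ (χ y)) z = jacobianDet φ (χ z) * jacobianDet χ z := by
  rw [jacobianDet, fderiv_fun_comp z hφ hχ, ContinuousLinearMap.toLinearMap_comp,
    LinearMap.det_comp]
  rfl

theorem eventually_jacobianDet_comp (hφ : AnalyticAt ℂ φ (χ z)) (hχ : AnalyticAt ℂ χ z)
    [CompleteSpace E] :
    ∀ᶠ y in 𝓝 z, jacobianDet (fun y => φ (χ y)) y = jacobianDet φ (χ y) * jacobianDet χ y := by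
  filter_upwards [hχ.eventually_analyticAt,
    hχ.continuousAt.eventually hφ.eventually_analyticAt] with y hχy hφy
  exact jacobianDet_comp hφy.differentiableAt hχy.differentiableAt

theorem jacobianDet_congr (h : φ =ᶠ[𝓝 z] χ) : jacobianDet φ =ᶠ[𝓝 z] jacobianDet χ := by
  filter_upwards [h.eventually_nhds] with y hy
  rw [jacobianDet, jacobianDet, EventuallyEq.fderiv_eq hy]

end JacobianDet

theorem analyticAt_jacobianDet {ι : Type*} [Fintype ι] {φ : (ι → ℂ) → (ι → ℂ)} {z : ι → ℂ}
    (hφ : AnalyticAt ℂ φ z) : AnalyticAt ℂ (jacobianDet φ) z := by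
  classical
  have entry (i j : ι) : AnalyticAt ℂ (fun y => fderiv ℂ φ y (Pi.single j 1) i) z :=
    analyticAt_pi_iff.1 (analyticAt_fderiv_apply hφ analyticAt_const) i
  have expand : jacobianDet φ = fun y =>
      ∑ π : Equiv.Perm ι, ((Equiv.Perm.sign π : ℤ) : ℂ) *
        ∏ i, fderiv ℂ φ y (Pi.single i 1) (π i) := by
    ext y
    simp [jacobianDet, ← LinearMap.det_toMatrix', Matrix.det_apply', LinearMap.toMatrix'_apply]
  rw [expand]
  exact Finset.analyticAt_fun_sum _ fun π _ =>
    analyticAt_const.mul (Finset.analyticAt_fun_prod _ fun i _ => entry (π i) i)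

namespace IsGermBiholo
variable {n : ℕ} {φ φι χ χι : (Fin n → ℂ) → (Fin n → ℂ)}

theorem analyticAt (h : IsGermBiholo φ φι) : AnalyticAt ℂ φ 0 := h.1

theorem map_zero (h : IsGermBiholo φ φι) : φ 0 = 0 := h.2.2.1

theorem eventually_left_inv (h : IsGermBiholo φ φι) : ∀ᶠ z in 𝓝 0, φι (φ z) = z := h.2.2.2.2.1

theorem symm (h : IsGermBiholo φ φι) : IsGermBiholo φι φ :=
  ⟨h.2.1, h.1, h.2.2.2.1, h.2.2.1, h.2.2.2.2.2, h.2.2.2.2.1⟩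

theorem refl : IsGermBiholo (fun z : Fin n → ℂ => z) fun z => z :=
  ⟨analyticAt_id, analyticAt_id, rfl, rfl, .of_forall fun _ => rfl, .of_forall fun _ => rfl⟩

theorem tendsto (h : IsGermBiholo φ φι) : Tendsto φ (𝓝 0) (𝓝 0) := by
  simpa [h.map_zero] using h.analyticAt.continuousAt.tendsto

theorem eventually_of_comp {P : (Fin n → ℂ) → Prop} (h : IsGermBiholo φ φι)
    (hP : ∀ᶠ z in 𝓝 0, P (φ z)) : ∀ᶠ z in 𝓝 0, P z := by
  filter_upwards [h.symm.tendsto.eventually hP, h.symm.eventually_left_inv] with z hPz hz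
  rwa [hz] at hPz

theorem analyticAt_comp {F : Type*} [NormedAddCommGroup F] [NormedSpace ℂ F]
    {G : (Fin n → ℂ) → F} (h : IsGermBiholo φ φι) (hG : AnalyticAt ℂ G 0) :
    AnalyticAt ℂ (fun z => G (φ z)) 0 :=
  AnalyticAt.fun_comp (by rwa [h.map_zero]) h.analyticAt

theorem comp (h : IsGermBiholo φ φι) (h' : IsGermBiholo χ χι) :
    IsGermBiholo (fun z => φ (χ z)) (fun z => χι (φι z)) := by
  refine ⟨h'.analyticAt_comp h.analyticAt, h.symm.analyticAt_comp h'.symm.analyticAt,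
    by simp [h.map_zero, h'.map_zero], by simp [h.symm.map_zero, h'.symm.map_zero], ?_, ?_⟩
  · filter_upwards [h'.eventually_left_inv, h'.tendsto.eventually h.eventually_left_inv]
      with z hz hχz
    rw [hχz, hz]
  · filter_upwards [h.symm.eventually_left_inv,
      h.symm.tendsto.eventually h'.symm.eventually_left_inv] with z hz hφz
    rw [hφz, hz]

theorem jacobianDet_comp (h : IsGermBiholo φ φι) (h' : IsGermBiholo χ χι) :
    ∀ᶠ z in 𝓝 0, jacobianDet (fun y => φ (χ y)) z = jacobianDet φ (χ z) * jacobianDet χ z :=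
  eventually_jacobianDet_comp (by rw [h'.map_zero]; exact h.analyticAt) h'.analyticAt

theorem jacobianDet_mul_jacobianDet_symm (h : IsGermBiholo φ φι) :
    ∀ᶠ z in 𝓝 0, jacobianDet φ (φι z) * jacobianDet φι z = 1 := by
  filter_upwards [h.jacobianDet_comp h.symm, jacobianDet_congr h.symm.eventually_left_inv]
    with z hcomp hid
  rw [← hcomp, hid, jacobianDet_id]

theorem of_jacobianDet_ne_zero (hφ : AnalyticAt ℂ φ 0) (h0 : φ 0 = 0)
    (hdet : jacobianDet φ 0 ≠ 0) : ∃ φι, IsGermBiholo φ φι := by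
  let e := (fderiv ℂ φ 0).toContinuousLinearEquivOfDetNeZero hdet
  have hφ' : HasFDerivAt φ (e : (Fin n → ℂ) →L[ℂ] (Fin n → ℂ)) 0 := by
    rw [show (e : (Fin n → ℂ) →L[ℂ] (Fin n → ℂ)) = fderiv ℂ φ 0 from
      ContinuousLinearMap.coe_toContinuousLinearEquivOfDetNeZero _ _]
    exact hφ.differentiableAt.hasFDerivAt
  have hC : ContDiffAt ℂ ⊤ φ 0 := hφ.contDiffAt
  have hS := hC.hasStrictFDerivAt' hφ' (by simp)
  have inverse_an := hC.to_localInverse hφ' (by simp)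
  have inverse_zero := hS.localInverse_apply_image
  have right_inv := hS.eventually_right_inverse
  rw [h0] at inverse_an inverse_zero right_inv
  exact ⟨hC.localInverse hφ' (by simp), hφ, inverse_an.analyticAt, h0, inverse_zero,
    hS.eventually_left_inverse, right_inv⟩

end IsGermBiholo

/-! ### Diagonal linear flows -/

section DiagonalFlow
variable {ι : Type*}

/-- The diagonal linear map `z ↦ (e^{c_i} z_i)_i`, the time-one flow of `∑ c_i z_i ∂/∂z_i`. -/
noncomputable def expMul (c z : ι → ℂ) : ι → ℂ := fun i => Complex.exp (c i) * z i

theorem expMul_zero_left (z : ι → ℂ) : expMul 0 z = z := by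
  ext i
  simp [expMul]

theorem expMul_zero_right (c : ι → ℂ) : expMul c 0 = 0 := by
  ext i
  simp [expMul]

theorem expMul_add (a b z : ι → ℂ) : expMul (a + b) z = expMul a (expMul b z) := by
  ext i
  simp [expMul, Complex.exp_add, mul_assoc]

theorem hasDerivAt_expMul_smul (c z : ι → ℂ) (s : ℝ) :
    HasDerivAt (fun s : ℝ => expMul ((s : ℂ) • c) z) (c * expMul ((s : ℂ) • c) z) s := by
  refine hasDerivAt_pi.2 fun i => ?_
  have hexponent : HasDerivAt (fun s : ℝ => (s : ℂ) * c i) (1 * c i) s :=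
    (Complex.ofRealCLM.hasDerivAt (x := s)).mul_const _
  refine (hexponent.cexp.mul_const (z i)).congr_deriv ?_
  simp only [expMul, Pi.mul_apply, Pi.smul_apply, smul_eq_mul]
  ring

variable [Fintype ι]

theorem prod_expMul (c z : ι → ℂ) : ∏ i, expMul c z i = Complex.exp (∑ i, c i) * ∏ i, z i := by
  simp [expMul, Finset.prod_mul_distrib, Complex.exp_sum]

theorem norm_expMul_smul_le_max (c z : ι → ℂ) {s : ℝ} (hs : s ∈ Set.Icc (0 : ℝ) 1) :
    ‖expMul ((s : ℂ) • c) z‖ ≤ max ‖z‖ ‖expMul c z‖ := by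
  refine (pi_norm_le_iff_of_nonneg (le_max_of_le_left (norm_nonneg z))).2 fun i => ?_
  have hre : ((s : ℂ) * c i).re = s * (c i).re := by simp
  rw [expMul, Pi.smul_apply, smul_eq_mul, norm_mul, Complex.norm_exp, hre]
  rcases le_total (c i).re 0 with hc | hc
  · refine le_max_of_le_left (le_trans ?_ (norm_le_pi_norm z i))
    exact mul_le_of_le_one_left (norm_nonneg _)
      (Real.exp_le_one_iff.2 (mul_nonpos_of_nonneg_of_nonpos hs.1 hc))
  · refine le_max_of_le_right (le_trans ?_ (norm_le_pi_norm (expMul c z) i))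
    rw [expMul, norm_mul, Complex.norm_exp]
    gcongr
    exact mul_le_of_le_one_left hc hs.2

theorem comp_expMul_eq_of_fderiv_eq_zero {G : (ι → ℂ) → ℂ} {r : ℝ} {c z : ι → ℂ}
    (hG : DifferentiableOn ℂ G (Metric.ball 0 r))
    (h0 : ∀ y ∈ Metric.ball 0 r, fderiv ℂ G y (c * y) = 0)
    (hz : z ∈ Metric.ball 0 r) (hcz : expMul c z ∈ Metric.ball 0 r) : G (expMul c z) = G z := by
  have orbit_mem : ∀ s ∈ Set.Icc (0 : ℝ) 1, expMul ((s : ℂ) • c) z ∈ Metric.ball 0 r := by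
    intro s hs
    rw [mem_ball_zero_iff] at hz hcz ⊢
    exact (norm_expMul_smul_le_max c z hs).trans_lt (max_lt hz hcz)
  have orbit_deriv : ∀ s ∈ Set.Icc (0 : ℝ) 1,
      HasDerivAt (fun s : ℝ => G (expMul ((s : ℂ) • c) z)) 0 s := fun s hs => by
    rw [← h0 _ (orbit_mem s hs)]
    exact hasDerivAt_comp_curve
      (hG.differentiableAt (Metric.isOpen_ball.mem_nhds (orbit_mem s hs)))
      (hasDerivAt_expMul_smul c z s)
  have := constant_of_has_deriv_right_zero
    (fun s hs => (orbit_deriv s hs).continuousAt.continuousWithinAt)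
    (fun s hs => (orbit_deriv s (Set.Ico_subset_Icc_self hs)).hasDerivWithinAt) 1 (by simp)
  simpa [expMul_zero_left] using this

end DiagonalFlow

/-! ### Circle actions, averages and primitives along linear fields -/

section Circle
variable {ι : Type*}

/-- The value at `z` of the linear vector field `∑ d_i z_i ∂/∂z_i`. -/
def eulerField (d : ι → ℤ) (z : ι → ℂ) : ι → ℂ := (fun i => (d i : ℂ)) * z

/-- The derivative of `G` along the vector field `∑ d_i z_i ∂/∂z_i`. -/
noncomputable def eulerDeriv (d : ι → ℤ) (G : (ι → ℂ) → ℂ) (z : ι → ℂ) : ℂ :=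
  fderiv ℂ G z (eulerField d z)

theorem eulerDeriv_apply_zero (d : ι → ℤ) (G : (ι → ℂ) → ℂ) : eulerDeriv d G 0 = 0 := by
  simp [eulerDeriv, eulerField]

variable [Fintype ι]

/-- The circle action with weights `d`: `z ↦ (e^{iθ d_i} z_i)_i`. -/
noncomputable def rot (d : ι → ℤ) (θ : ℝ) : (ι → ℂ) →L[ℂ] (ι → ℂ) :=
  ContinuousLinearMap.mul ℂ (ι → ℂ) fun i => Complex.exp (θ * (Complex.I * d i))

variable {d e : ι → ℤ} {G H : (ι → ℂ) → ℂ} {z : ι → ℂ}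

theorem rot_eq_expMul (d : ι → ℤ) (θ : ℝ) (z : ι → ℂ) :
    rot d θ z = expMul ((θ : ℂ) • fun i => Complex.I * d i) z := rfl

theorem rot_zero (d : ι → ℤ) (z : ι → ℂ) : rot d 0 z = z := by
  simp [rot_eq_expMul, expMul_zero_left]

theorem rot_add (d : ι → ℤ) (a b : ℝ) (z : ι → ℂ) : rot d (a + b) z = rot d a (rot d b z) := by
  simp only [rot_eq_expMul, ← expMul_add, ← add_smul, Complex.ofReal_add]

theorem rot_comm (d e : ι → ℤ) (a b : ℝ) (z : ι → ℂ) :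
    rot d a (rot e b z) = rot e b (rot d a z) := by
  simp only [rot_eq_expMul, ← expMul_add, add_comm]

theorem rot_add_two_pi (d : ι → ℤ) (θ : ℝ) (z : ι → ℂ) :
    rot d (θ + 2 * Real.pi) z = rot d θ z := by
  rw [rot_add]
  congr 1
  ext i
  have : ((2 * Real.pi : ℝ) : ℂ) * (Complex.I * d i) = d i * (2 * Real.pi * Complex.I) := by
    push_cast; ring
  rw [rot_eq_expMul, expMul, Pi.smul_apply, smul_eq_mul, this, Complex.exp_int_mul_two_pi_mul_I,
    one_mul]

theorem norm_rot_le_one (d : ι → ℤ) (θ : ℝ) : ‖rot d θ‖ ≤ 1 := by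
  refine (ContinuousLinearMap.opNorm_mul_apply_le ℂ _ _).trans
    ((pi_norm_le_iff_of_nonneg zero_le_one).2 fun i => ?_)
  have : (θ : ℂ) * (Complex.I * d i) = ((θ * d i : ℝ) : ℂ) * Complex.I := by push_cast; ring
  rw [this, Complex.norm_exp_ofReal_mul_I]

theorem eventually_rot {P : (ι → ℂ) → Prop} (h : ∀ᶠ z in 𝓝 (0 : ι → ℂ), P z) (d : ι → ℤ) :
    ∀ᶠ z in 𝓝 (0 : ι → ℂ), ∀ θ, P (rot d θ z) := by
  obtain ⟨r, hr, hball⟩ := Metric.eventually_nhds_iff_ball.1 h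
  refine Metric.eventually_nhds_iff_ball.2 ⟨r, hr, fun z hz θ => hball _ ?_⟩
  rw [mem_ball_zero_iff] at hz ⊢
  exact ((rot d θ).le_of_opNorm_le (norm_rot_le_one d θ) z).trans_lt (by rwa [one_mul])

theorem hasDerivAt_rot (d : ι → ℤ) (θ : ℝ) (z : ι → ℂ) :
    HasDerivAt (fun t : ℝ => rot d t z) (Complex.I • eulerField d (rot d θ z)) θ := by
  refine (hasDerivAt_expMul_smul (fun i => Complex.I * d i) z θ).congr_deriv ?_
  ext i
  simp only [eulerField, rot_eq_expMul, Pi.mul_apply, Pi.smul_apply, smul_eq_mul, mul_assoc]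

theorem continuous_rot (d : ι → ℤ) : Continuous (rot d) :=
  (ContinuousLinearMap.continuous _).comp (by fun_prop)

theorem hasDerivAt_comp_rot {θ : ℝ} (hG : AnalyticAt ℂ G (rot d θ z)) :
    HasDerivAt (fun t => G (rot d t z)) (Complex.I * eulerDeriv d G (rot d θ z)) θ := by
  simpa [eulerDeriv] using hasDerivAt_comp_curve hG.differentiableAt (hasDerivAt_rot d θ z)

theorem periodic_comp_rot (d : ι → ℤ) (G : (ι → ℂ) → ℂ) (z : ι → ℂ) :
    Function.Periodic (fun θ => G (rot d θ z)) (2 * Real.pi) := fun θ => by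
  simp only [rot_add_two_pi]

theorem eventually_continuous_comp_rot (hG : AnalyticAt ℂ G 0) (d : ι → ℤ) :
    ∀ᶠ z in 𝓝 (0 : ι → ℂ), Continuous fun θ => G (rot d θ z) := by
  filter_upwards [eventually_rot hG.eventually_analyticAt d] with z hz
  exact continuous_iff_continuousAt.2 fun θ => (hasDerivAt_comp_rot (hz θ)).continuousAt

/-- `G` is invariant near the origin under the circle action with weights `d`. -/
def IsRotInvariant (d : ι → ℤ) (G : (ι → ℂ) → ℂ) : Prop :=
  ∀ᶠ z in 𝓝 (0 : ι → ℂ), ∀ θ, G (rot d θ z) = G z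

/-- The average of `G` over the circle action with weights `d`. -/
noncomputable def avg (d : ι → ℤ) (G : (ι → ℂ) → ℂ) (z : ι → ℂ) : ℂ :=
  (2 * Real.pi : ℂ)⁻¹ * ∫ θ in (0 : ℝ)..(2 * Real.pi), G (rot d θ z)

/-- A primitive of `G - avg d G` along the vector field `∑ d_i z_i ∂/∂z_i`. -/
noncomputable def eulerPrim (d : ι → ℤ) (G : (ι → ℂ) → ℂ) (z : ι → ℂ) : ℂ :=
  Complex.I * (2 * Real.pi : ℂ)⁻¹ * ∫ θ in (0 : ℝ)..(2 * Real.pi), (θ : ℂ) * G (rot d θ z)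

theorem analyticAt_eulerDeriv (hG : AnalyticAt ℂ G 0) : AnalyticAt ℂ (eulerDeriv d G) 0 :=
  analyticAt_fderiv_apply hG (analyticAt_pi_iff.2 fun i =>
    analyticAt_const.mul (analyticAt_coord i 0))

theorem analyticAt_avg (hG : AnalyticAt ℂ G 0) : AnalyticAt ℂ (avg d G) 0 := by
  have := analyticAt_intervalIntegral_smul_comp (a := 0) (b := 2 * Real.pi) (w := fun _ => 1)
    continuous_const (continuous_rot d) (fun θ _ => norm_rot_le_one d θ) hG
  simp only [one_smul] at this
  exact analyticAt_const.mul this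

theorem analyticAt_eulerPrim (hG : AnalyticAt ℂ G 0) : AnalyticAt ℂ (eulerPrim d G) 0 :=
  analyticAt_const.mul (analyticAt_intervalIntegral_smul_comp Complex.continuous_ofReal
    (continuous_rot d) (fun θ _ => norm_rot_le_one d θ) hG)

theorem avg_eq_of_forall_rot (h : ∀ θ, G (rot d θ z) = G z) : avg d G z = G z := by
  simp only [avg, h, intervalIntegral.integral_const, sub_zero, Complex.real_smul]
  push_cast
  field_simp

theorem avg_apply_zero (d : ι → ℤ) (G : (ι → ℂ) → ℂ) : avg d G 0 = G 0 :=
  avg_eq_of_forall_rot fun θ => by rw [map_zero]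

theorem avg_rot (d : ι → ℤ) (G : (ι → ℂ) → ℂ) (τ : ℝ) (z : ι → ℂ) :
    avg d G (rot d τ z) = avg d G z := by
  simp only [avg, ← rot_add]
  rw [intervalIntegral.integral_comp_add_right (fun θ => G (rot d θ z)), zero_add, add_comm _ τ,
    (periodic_comp_rot d G z).intervalIntegral_add_eq τ 0, zero_add]

theorem isRotInvariant_avg (d : ι → ℤ) (G : (ι → ℂ) → ℂ) : IsRotInvariant d (avg d G) :=
  .of_forall fun z θ => avg_rot d G θ z

theorem avg_congr (h : G =ᶠ[𝓝 0] H) : avg d G =ᶠ[𝓝 0] avg d H := by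
  filter_upwards [eventually_rot h d] with z hz
  simp only [avg, hz]

theorem avg_add (hG : AnalyticAt ℂ G 0) (hH : AnalyticAt ℂ H 0) :
    avg d (fun y => G y + H y) =ᶠ[𝓝 0] fun z => avg d G z + avg d H z := by
  filter_upwards [eventually_continuous_comp_rot hG d, eventually_continuous_comp_rot hH d]
    with z hGz hHz
  simp only [avg]
  rw [intervalIntegral.integral_add (hGz.intervalIntegrable _ _) (hHz.intervalIntegrable _ _),
    mul_add]

theorem avg_eulerDeriv (hG : AnalyticAt ℂ G 0) : avg d (eulerDeriv d G) =ᶠ[𝓝 0] 0 := by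
  filter_upwards [eventually_rot hG.eventually_analyticAt d,
    eventually_continuous_comp_rot (analyticAt_eulerDeriv (d := d) hG) d] with z hGz hcont
  have ftc := intervalIntegral.integral_eq_sub_of_hasDerivAt (a := 0) (b := 2 * Real.pi)
    (fun θ _ => hasDerivAt_comp_rot (hGz θ)) ((continuous_const.mul hcont).intervalIntegrable _ _)
  have closed : G (rot d (2 * Real.pi) z) = G (rot d 0 z) := by
    simpa using periodic_comp_rot d G z 0
  rw [closed, sub_self, intervalIntegral.integral_const_mul] at ftc
  rw [avg, (mul_eq_zero.1 ftc).resolve_left Complex.I_ne_zero, mul_zero, Pi.zero_apply]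

theorem avg_comm (hG : AnalyticAt ℂ G 0) : avg d (avg e G) =ᶠ[𝓝 0] avg e (avg d G) := by
  filter_upwards [eventually_rot (eventually_rot hG.eventually_analyticAt e) d] with z hz
  have orbit_cont : Continuous fun p : ℝ × ℝ => rot e p.2 (rot d p.1 z) :=
    ((continuous_rot e).comp continuous_snd).clm_apply
      (((continuous_rot d).comp continuous_fst).clm_apply continuous_const)
  have hcont : Continuous (Function.uncurry fun a b : ℝ => G (rot e b (rot d a z))) :=
    continuous_iff_continuousAt.2 fun p =>
      ContinuousAt.comp' (f := fun p : ℝ × ℝ => rot e p.2 (rot d p.1 z)) (hz p.1 p.2).continuousAt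
        orbit_cont.continuousAt
  simp only [avg, intervalIntegral.integral_const_mul]
  rw [MeasureTheory.intervalIntegral_intervalIntegral_swap]
  · simp only [rot_comm e d]
  · exact (hcont.continuousOn.integrableOn_compact (isCompact_uIcc.prod isCompact_uIcc)).mono_set
      (Set.prod_mono Set.uIoc_subset_uIcc Set.uIoc_subset_uIcc)

namespace IsRotInvariant

theorem eulerDeriv_eq_zero (h : IsRotInvariant d G) (hG : AnalyticAt ℂ G 0) :
    eulerDeriv d G =ᶠ[𝓝 0] 0 := by
  filter_upwards [h, hG.eventually_analyticAt] with z hz hGz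
  have hderiv := hasDerivAt_comp_rot (d := d) (θ := 0) (z := z) (G := G) (by rwa [rot_zero])
  simp only [hz, rot_zero] at hderiv
  simpa using hderiv.unique (hasDerivAt_const _ _)

theorem avg_eq (h : IsRotInvariant d G) : avg d G =ᶠ[𝓝 0] G :=
  h.mono fun _ hz => avg_eq_of_forall_rot hz

theorem avg (h : IsRotInvariant e G) : IsRotInvariant e (avg d G) := by
  filter_upwards [eventually_rot h d] with z hz θ
  simp only [_root_.avg, rot_comm d e, hz]

theorem inv (h : IsRotInvariant d G) : IsRotInvariant d fun z => (G z)⁻¹ :=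
  h.mono fun z hz θ => by simp only [hz]

theorem avg_mul (hH : IsRotInvariant d H) :
    _root_.avg d (fun y => G y * H y) =ᶠ[𝓝 0] fun z => _root_.avg d G z * H z := by
  filter_upwards [hH] with z hz
  simp only [_root_.avg, hz, intervalIntegral.integral_mul_const, mul_assoc]

end IsRotInvariant

theorem hasDerivAt_intervalIntegral_mul_comp_add {F : ℝ → ℂ} {T : ℝ} (hF : Continuous F)
    (hper : Function.Periodic F T) (τ : ℝ) :
    HasDerivAt (fun τ => ∫ θ in (0 : ℝ)..T, (θ : ℂ) * F (θ + τ))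
      (T * F τ - ∫ θ in (0 : ℝ)..T, F θ) τ := by
  have hxF : Continuous fun x : ℝ => (x : ℂ) * F x := Complex.continuous_ofReal.mul hF
  set K : ℝ → ℂ := fun y => ∫ x in (0 : ℝ)..y, (x : ℂ) * F x
  set M : ℂ := ∫ θ in (0 : ℝ)..T, F θ
  have deriv_K (y : ℝ) : HasDerivAt K (y * F y) y :=
    intervalIntegral.integral_hasDerivAt_right (hxF.intervalIntegrable _ _)
      (hxF.stronglyMeasurableAtFilter _ _) hxF.continuousAt
  -- the substitution `x = θ + τ` moves the parameter into the limits of integration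
  have shift (τ : ℝ) : ∫ θ in (0 : ℝ)..T, (θ : ℂ) * F (θ + τ) = K (τ + T) - K τ - τ * M := by
    calc ∫ θ in (0 : ℝ)..T, (θ : ℂ) * F (θ + τ)
        = ∫ θ in (0 : ℝ)..T, (((θ + τ : ℝ) : ℂ) * F (θ + τ) - τ * F (θ + τ)) := by
          congr 1; ext θ; push_cast; ring
      _ = ∫ x in τ..(τ + T), ((x : ℂ) * F x - τ * F x) := by
          rw [intervalIntegral.integral_comp_add_right (fun x : ℝ => (x : ℂ) * F x - τ * F x),
            zero_add, add_comm T τ]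
      _ = (∫ x in τ..(τ + T), (x : ℂ) * F x) - τ * ∫ x in τ..(τ + T), F x := by
          have hτF : Continuous fun x : ℝ => (τ : ℂ) * F x := continuous_const.mul hF
          rw [intervalIntegral.integral_sub (hxF.intervalIntegrable _ _)
            (hτF.intervalIntegrable _ _), intervalIntegral.integral_const_mul]
      _ = K (τ + T) - K τ - τ * M := by
          rw [hper.intervalIntegral_add_eq τ 0, zero_add,
            intervalIntegral.integral_interval_sub_left (hxF.intervalIntegrable _ _)
              (hxF.intervalIntegrable _ _)]
  simp only [shift]
  refine ((((deriv_K _).comp_add_const τ T).sub (deriv_K τ)).sub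
    ((Complex.ofRealCLM.hasDerivAt (x := τ)).mul_const M)).congr_deriv ?_
  rw [hper, Complex.ofRealCLM_apply]
  push_cast
  ring

theorem eulerDeriv_eulerPrim (hG : AnalyticAt ℂ G 0) :
    eulerDeriv d (eulerPrim d G) =ᶠ[𝓝 0] fun z => G z - avg d G z := by
  filter_upwards [eventually_continuous_comp_rot hG d,
    (analyticAt_eulerPrim (d := d) hG).eventually_analyticAt] with z hcont hprim
  have hderiv := hasDerivAt_comp_rot (d := d) (θ := 0) (z := z) (G := eulerPrim d G)
    (by rwa [rot_zero])
  have hderiv' := (hasDerivAt_intervalIntegral_mul_comp_add hcont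
    (periodic_comp_rot d G z) 0).const_mul (Complex.I * (2 * Real.pi : ℂ)⁻¹)
  simp only [rot_add] at hderiv'
  have huniq := hderiv.unique hderiv'
  rw [rot_zero, mul_assoc] at huniq
  rw [mul_left_cancel₀ Complex.I_ne_zero huniq, avg]
  push_cast
  field_simp

end Circle

/-! ### Shears along linear fields -/

/-- The map sending `z` to its image under the flow of `∑ d_i z_i ∂/∂z_i` at time `v z`. -/
noncomputable def shear {ι : Type*} (d : ι → ℤ) (v : (ι → ℂ) → ℂ) (z : ι → ℂ) : ι → ℂ :=
  expMul (fun i => v z * d i) z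

theorem shear_apply_zero {ι : Type*} (d : ι → ℤ) (v : (ι → ℂ) → ℂ) : shear d v 0 = 0 :=
  expMul_zero_right _

section Shear
variable {ι : Type*} [Fintype ι] {d : ι → ℤ} {v : (ι → ℂ) → ℂ} {z : ι → ℂ}

theorem prod_shear (d : ι → ℤ) (v : (ι → ℂ) → ℂ) (z : ι → ℂ) :
    ∏ i, shear d v z i = Complex.exp (v z * ∑ i, (d i : ℂ)) * ∏ i, z i := by
  rw [shear, prod_expMul, Finset.mul_sum]

theorem prod_shear_of_sum_eq_zero (hd : ∑ i, d i = 0) (v : (ι → ℂ) → ℂ) (z : ι → ℂ) :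
    ∏ i, shear d v z i = ∏ i, z i := by
  have : ∑ i, (d i : ℂ) = 0 := mod_cast hd
  simp [prod_shear, this]

theorem analyticAt_shear (hv : AnalyticAt ℂ v z) : AnalyticAt ℂ (shear d v) z :=
  analyticAt_pi_iff.2 fun i => (hv.mul analyticAt_const).cexp.mul (analyticAt_coord i z)

theorem tendsto_shear (hv : AnalyticAt ℂ v 0) : Tendsto (shear d v) (𝓝 0) (𝓝 0) := by
  simpa [shear_apply_zero] using (analyticAt_shear (d := d) hv).continuousAt.tendsto

theorem analyticAt_comp_shear {G : (ι → ℂ) → ℂ} (hG : AnalyticAt ℂ G 0) (hv : AnalyticAt ℂ v 0) :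
    AnalyticAt ℂ (fun z => G (shear d v z)) 0 :=
  AnalyticAt.fun_comp (by rwa [shear_apply_zero]) (analyticAt_shear hv)

theorem hasFDerivAt_shear (hv : DifferentiableAt ℂ v z) :
    HasFDerivAt (shear d v)
      ((ContinuousLinearMap.mul ℂ (ι → ℂ) fun i => Complex.exp (v z * d i)).comp
        (.id ℂ (ι → ℂ) + (fderiv ℂ v z).smulRight (eulerField d z))) z := by
  refine hasFDerivAt_pi'.2 fun i => ?_
  have hcoord : HasFDerivAt (fun y : ι → ℂ => y i) (ContinuousLinearMap.proj i) z :=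
    (ContinuousLinearMap.proj (R := ℂ) (φ := fun _ : ι => ℂ) i).hasFDerivAt
  refine ((hv.hasFDerivAt.mul_const (d i : ℂ)).cexp.mul hcoord).congr_fderiv ?_
  ext y
  simp only [add_apply, smul_apply, ContinuousLinearMap.proj_apply, smul_eq_mul, eulerField,
    ContinuousLinearMap.comp_apply, ContinuousLinearMap.mul_apply', Pi.mul_apply, Pi.add_apply,
    ContinuousLinearMap.smulRight_apply, ContinuousLinearMap.id_apply, Pi.smul_apply]
  ring

theorem fderiv_shear_eulerField (hv : DifferentiableAt ℂ v z) :
    fderiv ℂ (shear d v) z (eulerField d z) =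
      (1 + eulerDeriv d v z) • eulerField d (shear d v z) := by
  rw [(hasFDerivAt_shear hv).fderiv]
  ext i
  simp only [eulerField, add_apply, ContinuousLinearMap.mul_apply', ContinuousLinearMap.comp_apply,
    ContinuousLinearMap.smulRight_apply, ContinuousLinearMap.id_apply, Pi.add_apply, Pi.mul_apply,
    Pi.smul_apply, smul_eq_mul, eulerDeriv, shear, expMul]
  ring

theorem det_pi_mul (c : ι → ℂ) :
    LinearMap.det (ContinuousLinearMap.mul ℂ (ι → ℂ) c).toLinearMap = ∏ i, c i := by
  classical
  have : (ContinuousLinearMap.mul ℂ (ι → ℂ) c).toLinearMap = (Matrix.diagonal c).toLin' := by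
    refine LinearMap.ext fun y => funext fun i => ?_
    simp [Matrix.mulVec_diagonal]
  rw [this, LinearMap.det_toLin', Matrix.det_diagonal]

theorem jacobianDet_shear (hv : DifferentiableAt ℂ v z) :
    jacobianDet (shear d v) z =
      Complex.exp (v z * ∑ i, (d i : ℂ)) * (1 + eulerDeriv d v z) := by
  have htrans : (ContinuousLinearMap.id ℂ (ι → ℂ) +
      (fderiv ℂ v z).smulRight (eulerField d z)).toLinearMap =
      LinearMap.transvection (fderiv ℂ v z).toLinearMap (eulerField d z) := by
    ext
    simp [LinearMap.transvection.apply]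
  rw [jacobianDet, (hasFDerivAt_shear hv).fderiv, ContinuousLinearMap.toLinearMap_comp,
    LinearMap.det_comp, det_pi_mul, ← Complex.exp_sum, ← Finset.mul_sum, htrans,
    LinearMap.transvection.det]
  rfl

theorem jacobianDet_shear_of_sum_eq_zero (hd : ∑ i, d i = 0) (hv : DifferentiableAt ℂ v z) :
    jacobianDet (shear d v) z = 1 + eulerDeriv d v z := by
  have : ∑ i, (d i : ℂ) = 0 := mod_cast hd
  simp [jacobianDet_shear hv, this]

theorem exists_isGermBiholo_shear {n : ℕ} (d : Fin n → ℤ) {v : (Fin n → ℂ) → ℂ}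
    (hv : AnalyticAt ℂ v 0) : ∃ φι, IsGermBiholo (shear d v) φι := by
  refine IsGermBiholo.of_jacobianDet_ne_zero (analyticAt_shear hv) (shear_apply_zero d v) ?_
  simp [jacobianDet_shear hv.differentiableAt, eulerDeriv_apply_zero]

theorem IsRotInvariant.comp_shear {G : (ι → ℂ) → ℂ} (h : IsRotInvariant d G)
    (hG : AnalyticAt ℂ G 0) (hv : AnalyticAt ℂ v 0) :
    ∀ᶠ z in 𝓝 (0 : ι → ℂ), G (shear d v z) = G z := by
  obtain ⟨r, hr, hball⟩ := Metric.eventually_nhds_iff_ball.1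
    (hG.eventually_analyticAt.and (h.eulerDeriv_eq_zero hG))
  have mem_ball := Metric.ball_mem_nhds (0 : ι → ℂ) hr
  filter_upwards [mem_ball, (tendsto_shear (d := d) hv).eventually mem_ball] with z hz hSz
  refine comp_expMul_eq_of_fderiv_eq_zero
    (fun y hy => (hball y hy).1.differentiableAt.differentiableWithinAt) (fun y hy => ?_) hz hSz
  have : (fun i => v z * (d i : ℂ)) * y = v z • eulerField d y := by
    ext; simp [eulerField, mul_assoc]
  rw [this, map_smul]
  exact smul_eq_zero_of_right _ (hball y hy).2

theorem eulerDeriv_comp_shear {P : (ι → ℂ) → ℂ} (hP : AnalyticAt ℂ P 0) (hv : AnalyticAt ℂ v 0) :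
    ∀ᶠ z in 𝓝 (0 : ι → ℂ), eulerDeriv d (fun y => P (shear d v y)) z =
      (1 + eulerDeriv d v z) * eulerDeriv d P (shear d v z) := by
  filter_upwards [hv.eventually_analyticAt,
    (tendsto_shear (d := d) hv).eventually hP.eventually_analyticAt] with z hvz hPz
  rw [eulerDeriv, fderiv_fun_comp z hPz.differentiableAt (analyticAt_shear hvz).differentiableAt,
    ContinuousLinearMap.comp_apply, fderiv_shear_eulerField hvz.differentiableAt, map_smul]
  rfl

/-- With `A = avg d G` and `P = eulerPrim d G`, the transported density is
`A + A * eulerDeriv d v + eulerDeriv d (P ∘ shear d v)`. -/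
theorem avg_comp_shear_mul_jacobianDet (hd : ∑ i, d i = 0) {G : (ι → ℂ) → ℂ}
    (hG : AnalyticAt ℂ G 0) (hv : AnalyticAt ℂ v 0) :
    avg d (fun z => G (shear d v z) * jacobianDet (shear d v) z) =ᶠ[𝓝 0] avg d G := by
  have hA : AnalyticAt ℂ (avg d G) 0 := analyticAt_avg hG
  have hP : AnalyticAt ℂ (eulerPrim d G) 0 := analyticAt_eulerPrim hG
  have hPS := analyticAt_comp_shear (d := d) hP hv
  have hinv := isRotInvariant_avg d G
  have hDvA : AnalyticAt ℂ (fun z => eulerDeriv d v z * avg d G z) 0 :=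
    (analyticAt_eulerDeriv hv).mul hA
  have density : (fun z => G (shear d v z) * jacobianDet (shear d v) z) =ᶠ[𝓝 0]
      fun z => (avg d G z + eulerDeriv d v z * avg d G z) +
        eulerDeriv d (fun y => eulerPrim d G (shear d v y)) z := by
    filter_upwards [hv.eventually_analyticAt, eulerDeriv_comp_shear (d := d) hP hv,
      (tendsto_shear (d := d) hv).eventually (eulerDeriv_eulerPrim (d := d) hG),
      hinv.comp_shear hA hv] with z hvz hchain hprim havg
    rw [jacobianDet_shear_of_sum_eq_zero hd hvz.differentiableAt, hchain, hprim, havg]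
    ring
  filter_upwards [avg_congr density, avg_add (d := d) (hA.fun_add hDvA)
    (analyticAt_eulerDeriv (d := d) hPS), avg_add (d := d) hA hDvA, hinv.avg_eq,
    hinv.avg_mul (G := eulerDeriv d v), avg_eulerDeriv (d := d) hv, avg_eulerDeriv (d := d) hPS]
    with z hdensity hadd₁ hadd₂ havg hmul hv hPS
  rw [hdensity, hadd₁, hadd₂, havg, hmul, hv, hPS]
  simp

theorem avg_jacobianDet_comp_shear (hd : ∑ i, d i = 0) {F : (ι → ℂ) → (ι → ℂ)}
    (hF : AnalyticAt ℂ F 0) (hv : AnalyticAt ℂ v 0) :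
    avg d (jacobianDet fun z => F (shear d v z)) =ᶠ[𝓝 0] avg d (jacobianDet F) := by
  have hcomp : (jacobianDet fun z => F (shear d v z)) =ᶠ[𝓝 0]
      fun z => jacobianDet F (shear d v z) * jacobianDet (shear d v) z :=
    eventually_jacobianDet_comp (by rwa [shear_apply_zero]) (analyticAt_shear hv)
  exact (avg_congr hcomp).trans (avg_comp_shear_mul_jacobianDet hd (analyticAt_jacobianDet hF) hv)

/-- One step of Moser's method: the equation for `v` is `1 + eulerDeriv d v = G / avg d G`. -/
theorem exists_jacobianDet_shear_mul_avg_eq (hd : ∑ i, d i = 0) {G : (ι → ℂ) → ℂ}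
    (hG : AnalyticAt ℂ G 0) (h0 : G 0 ≠ 0) :
    ∃ v, AnalyticAt ℂ v 0 ∧
      ∀ᶠ z in 𝓝 0, jacobianDet (shear d v) z * avg d G (shear d v z) = G z := by
  have hA : AnalyticAt ℂ (avg d G) 0 := analyticAt_avg hG
  have hA0 : avg d G 0 ≠ 0 := by rwa [avg_apply_zero]
  have hinv := isRotInvariant_avg d G
  have hratio : AnalyticAt ℂ (fun z => G z * (avg d G z)⁻¹) 0 := hG.mul (hA.inv hA0)
  have hv := analyticAt_eulerPrim (d := d) hratio
  refine ⟨_, hv, ?_⟩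
  filter_upwards [hv.eventually_analyticAt, eulerDeriv_eulerPrim (d := d) hratio,
    hinv.inv.avg_mul (G := G), hinv.comp_shear hA hv, hA.continuousAt.eventually_ne hA0]
    with z hvz hprim havg hcomp hne
  rw [jacobianDet_shear_of_sum_eq_zero hd hvz.differentiableAt, hprim, havg, hcomp]
  field_simp
  ring

end Shear

/-! ### Iterated averages -/

/-- The weights of the vector field `z_k ∂/∂z_k - z_N ∂/∂z_N`, which annihilates `∏ i, z_i`. -/
def dir {ι : Type*} [DecidableEq ι] (N k : ι) : ι → ℤ := Pi.single k 1 - Pi.single N 1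

theorem sum_dir {ι : Type*} [DecidableEq ι] [Fintype ι] (N k : ι) : ∑ i, dir N k i = 0 := by
  simp [dir, Finset.sum_sub_distrib]

/-- The average of `G` over the torus generated by the circle actions with weights in `l`. -/
noncomputable def iterAvg {ι : Type*} [Fintype ι] (l : List (ι → ℤ)) (G : (ι → ℂ) → ℂ) :
    (ι → ℂ) → ℂ :=
  l.foldr avg G

section IterAvg
variable {ι : Type*} [Fintype ι] {l : List (ι → ℤ)} {d : ι → ℤ} {G H : (ι → ℂ) → ℂ}

theorem iterAvg_cons (d : ι → ℤ) (l : List (ι → ℤ)) (G : (ι → ℂ) → ℂ) :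
    iterAvg (d :: l) G = avg d (iterAvg l G) := rfl

theorem analyticAt_iterAvg (hG : AnalyticAt ℂ G 0) (l : List (ι → ℤ)) :
    AnalyticAt ℂ (iterAvg l G) 0 := by
  induction l with
  | nil => exact hG
  | cons d l ih => exact analyticAt_avg ih

theorem iterAvg_apply_zero (l : List (ι → ℤ)) (G : (ι → ℂ) → ℂ) : iterAvg l G 0 = G 0 := by
  induction l with
  | nil => rfl
  | cons d l ih => rw [iterAvg_cons, avg_apply_zero, ih]

theorem iterAvg_congr (h : G =ᶠ[𝓝 0] H) (l : List (ι → ℤ)) :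
    iterAvg l G =ᶠ[𝓝 0] iterAvg l H := by
  induction l with
  | nil => exact h
  | cons d l ih => exact avg_congr ih

theorem avg_iterAvg (hG : AnalyticAt ℂ G 0) (d : ι → ℤ) (l : List (ι → ℤ)) :
    avg d (iterAvg l G) =ᶠ[𝓝 0] iterAvg l (avg d G) := by
  induction l with
  | nil => rfl
  | cons e l ih => exact (avg_comm (analyticAt_iterAvg hG l)).trans (avg_congr ih)

theorem iterAvg_const (l : List (ι → ℤ)) (c : ℂ) : iterAvg l (fun _ => c) = fun _ => c := by
  induction l with
  | nil => rfl
  | cons d l ih => rw [iterAvg_cons, ih]; exact funext fun z => avg_eq_of_forall_rot fun _ => rfl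

theorem isRotInvariant_iterAvg (hd : d ∈ l) (G : (ι → ℂ) → ℂ) :
    IsRotInvariant d (iterAvg l G) := by
  induction l with
  | nil => simp at hd
  | cons e l ih =>
    rcases List.mem_cons.1 hd with rfl | hd
    · exact isRotInvariant_avg d _
    · exact (ih hd).avg

end IterAvg

theorem exists_isGermBiholo_jacobianDet_mul_iterAvg_eq {n : ℕ} {G : (Fin n → ℂ) → ℂ}
    (hG : AnalyticAt ℂ G 0) (h0 : G 0 ≠ 0) {l : List (Fin n → ℤ)} (hl : ∀ d ∈ l, ∑ i, d i = 0) :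
    ∃ χ χι, IsGermBiholo χ χι ∧ (∀ z, ∏ i, χ z i = ∏ i, z i) ∧
      ∀ᶠ z in 𝓝 0, jacobianDet χ z * iterAvg l G (χ z) = G z := by
  induction l with
  | nil =>
    exact ⟨_, _, .refl, fun _ => rfl, .of_forall fun z => by simp [jacobianDet_id, iterAvg]⟩
  | cons d l ih =>
    obtain ⟨hd, hl⟩ := List.forall_mem_cons.1 hl
    obtain ⟨χ, χι, hχ, hprod, hdensity⟩ := ih hl
    obtain ⟨v, hv, hstep⟩ := exists_jacobianDet_shear_mul_avg_eq hd (analyticAt_iterAvg hG l)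
      (by rwa [iterAvg_apply_zero])
    obtain ⟨φι, hφ⟩ := exists_isGermBiholo_shear d hv
    refine ⟨_, _, hφ.comp hχ, fun z => by rw [prod_shear_of_sum_eq_zero hd, hprod], ?_⟩
    filter_upwards [hdensity, hχ.tendsto.eventually hstep, hφ.jacobianDet_comp hχ]
      with z hdensity hstep hcomp
    rw [hcomp, ← hdensity, ← hstep, iterAvg_cons]
    ring

/-! ### Functions of the product of the coordinates -/

section ProdCoord
variable {ι : Type*} [Fintype ι]

theorem prod_coord_zero [Nonempty ι] : ∏ i, (0 : ι → ℂ) i = 0 := by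
  simp

theorem analyticAt_comp_prod_coord [Nonempty ι] {a : ℂ → ℂ} (ha : AnalyticAt ℂ a 0) :
    AnalyticAt ℂ (fun z : ι → ℂ => a (∏ i, z i)) 0 :=
  AnalyticAt.fun_comp (by rwa [prod_coord_zero]) (analyticAt_prod_coord 0)

theorem eulerDeriv_prod_coord (d : ι → ℤ) (z : ι → ℂ) :
    eulerDeriv d (fun y => ∏ i, y i) z = (∑ i, (d i : ℂ)) * ∏ i, z i := by
  classical
  have hderiv : HasFDerivAt (fun y : ι → ℂ => ∏ i, y i) (∑ i, (∏ j ∈ Finset.univ.erase i, z j) •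
      ContinuousLinearMap.proj (R := ℂ) (φ := fun _ : ι => ℂ) i) z :=
    HasFDerivAt.finsetProd fun i _ =>
      (ContinuousLinearMap.proj (R := ℂ) (φ := fun _ : ι => ℂ) i).hasFDerivAt
  simp only [eulerDeriv, hderiv.fderiv, _root_.sum_apply, _root_.smul_apply,
    ContinuousLinearMap.proj_apply, eulerField, Pi.mul_apply, smul_eq_mul, Finset.sum_mul]
  refine Finset.sum_congr rfl fun i _ => ?_
  rw [mul_left_comm, Finset.prod_erase_mul _ _ (Finset.mem_univ i)]

theorem eulerDeriv_comp_prod_coord (d : ι → ℤ) {a : ℂ → ℂ} {z : ι → ℂ}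
    (ha : DifferentiableAt ℂ a (∏ i, z i)) :
    eulerDeriv d (fun y => a (∏ i, y i)) z =
      deriv a (∏ i, z i) * ((∑ i, (d i : ℂ)) * ∏ i, z i) := by
  have hchain : HasFDerivAt (fun y : ι → ℂ => a (∏ i, y i))
      (deriv a (∏ i, z i) • fderiv ℂ (fun y : ι → ℂ => ∏ i, y i) z) z :=
    ha.hasDerivAt.comp_hasFDerivAt z (analyticAt_prod_coord z).differentiableAt.hasFDerivAt
  rw [← eulerDeriv_prod_coord, eulerDeriv, hchain.fderiv]
  rfl

theorem isRotInvariant_comp_prod_coord {d : ι → ℤ} (hd : ∑ i, d i = 0) (a : ℂ → ℂ) :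
    IsRotInvariant d fun z => a (∏ i, z i) := by
  have hd' : ∑ i, (d i : ℂ) = 0 := mod_cast hd
  refine .of_forall fun z θ => ?_
  simp [rot_eq_expMul, prod_expMul, ← Finset.mul_sum, hd']

theorem fderiv_mul_eq_zero_of_eulerDeriv_dir [DecidableEq ι] {G : (ι → ℂ) → ℂ} {z : ι → ℂ} {N : ι}
    (h : ∀ k, eulerDeriv (dir N k) G z = 0) {c : ι → ℂ} (hc : ∑ i, c i = 0) :
    fderiv ℂ G z (c * z) = 0 := by
  have hcz : c * z = ∑ k, c k • eulerField (dir N k) z := by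
    ext i
    simp only [Finset.sum_apply, Pi.smul_apply, eulerField, dir, Pi.mul_apply, Pi.sub_apply,
      smul_eq_mul, Int.cast_sub, sub_mul, mul_sub, Finset.sum_sub_distrib, ← mul_assoc,
      ← Finset.sum_mul, hc]
    simp [Pi.single_apply]
  rw [hcz, map_sum]
  refine Finset.sum_eq_zero fun k _ => ?_
  rw [map_smul]
  exact smul_eq_zero_of_right _ (h k)

theorem exists_expMul_eq_of_prod_eq [Nonempty ι] {y z : ι → ℂ} (hz : ∀ i, z i ≠ 0)
    (h : ∏ i, y i = ∏ i, z i) : ∃ b : ι → ℂ, ∑ i, b i = 0 ∧ expMul b y = z := by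
  classical
  have hy (i : ι) : y i ≠ 0 :=
    Finset.prod_ne_zero_iff.1 (h ▸ Finset.prod_ne_zero_iff.2 fun i _ => hz i) i (Finset.mem_univ i)
  let N : ι := Classical.arbitrary ι
  let c (i : ι) : ℂ := Complex.log (z i / y i)
  have exp_c (i : ι) : Complex.exp (c i) = z i / y i :=
    Complex.exp_log (div_ne_zero (hz i) (hy i))
  have exp_sum_c : Complex.exp (∑ i, c i) = 1 := by
    rw [Complex.exp_sum, Finset.prod_congr rfl fun i _ => exp_c i, Finset.prod_div_distrib, h,
      div_self (Finset.prod_ne_zero_iff.2 fun i _ => hz i)]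
  refine ⟨c - Pi.single N (∑ i, c i), by simp, funext fun i => ?_⟩
  have exp_single : Complex.exp (Pi.single (M := fun _ => ℂ) N (∑ i, c i) i) = 1 := by
    rcases eq_or_ne i N with rfl | hi
    · rw [Pi.single_eq_same, exp_sum_c]
    · rw [Pi.single_eq_of_ne hi, Complex.exp_zero]
  rw [expMul, Pi.sub_apply, Complex.exp_sub, exp_single, exp_c, div_one, div_mul_cancel₀ _ (hy i)]

theorem eq_of_prod_eq_of_eulerDeriv_dir [DecidableEq ι] {G : (ι → ℂ) → ℂ} {r : ℝ} {N : ι}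
    (hG : DifferentiableOn ℂ G (Metric.ball 0 r))
    (hdir : ∀ y ∈ Metric.ball 0 r, ∀ k, eulerDeriv (dir N k) G y = 0) {y z : ι → ℂ}
    (hy : y ∈ Metric.ball 0 r) (hz : z ∈ Metric.ball 0 r) (hz0 : ∀ i, z i ≠ 0)
    (h : ∏ i, y i = ∏ i, z i) : G z = G y := by
  have : Nonempty ι := ⟨N⟩
  obtain ⟨b, hb, rfl⟩ := exists_expMul_eq_of_prod_eq hz0 h
  exact comp_expMul_eq_of_fderiv_eq_zero hG
    (fun x hx => fderiv_mul_eq_zero_of_eulerDeriv_dir (hdir x hx) hb) hy hz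

/-- The point with product of coordinates `t` all of whose coordinates other than the `N`-th
are `δ`: a section of `z ↦ ∏ i, z_i`, along which torus-invariant functions are read off. -/
noncomputable def slice [DecidableEq ι] (N : ι) (δ t : ℂ) : ι → ℂ :=
  Function.update (fun _ => δ) N (t / δ ^ (Fintype.card ι - 1))

section Slice
variable [DecidableEq ι] {N : ι}

theorem prod_slice {δ : ℂ} (hδ : δ ≠ 0) (t : ℂ) : ∏ i, slice N δ t i = t := by
  rw [slice, Finset.prod_update_of_mem (Finset.mem_univ N), Finset.prod_const,
    Finset.card_sdiff_of_subset (by simp), Finset.card_singleton, Finset.card_univ]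
  exact div_mul_cancel₀ _ (pow_ne_zero _ hδ)

theorem analyticAt_slice (δ t : ℂ) : AnalyticAt ℂ (slice N δ) t := by
  refine analyticAt_pi_iff.2 fun i => ?_
  rcases eq_or_ne i N with rfl | hi
  · simp only [slice, Function.update_self]
    exact analyticAt_id.div_const
  · simp only [slice, Function.update_of_ne hi]
    exact analyticAt_const

theorem norm_slice_zero_le (δ : ℂ) : ‖slice N δ 0‖ ≤ ‖δ‖ := by
  refine (pi_norm_le_iff_of_nonneg (norm_nonneg δ)).2 fun i => ?_
  rcases eq_or_ne i N with rfl | hi <;> simp [slice, *]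

theorem exists_eventually_slice {P : (ι → ℂ) → Prop} (h : ∀ᶠ z in 𝓝 0, P z) (N : ι) :
    ∃ δ : ℂ, δ ≠ 0 ∧ ∀ᶠ t in 𝓝 0, P (slice N δ t) := by
  obtain ⟨r, hr, hball⟩ := Metric.eventually_nhds_iff_ball.1 h
  obtain ⟨δ, hδ, hδr⟩ := NormedField.exists_norm_lt ℂ hr
  have slice_zero_mem : slice N δ 0 ∈ Metric.ball 0 r :=
    mem_ball_zero_iff.2 ((norm_slice_zero_le δ).trans_lt hδr)
  exact ⟨δ, norm_pos_iff.1 hδ, ((analyticAt_slice δ 0).continuousAt.eventually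
    (Metric.isOpen_ball.mem_nhds slice_zero_mem)).mono fun t ht => hball _ ht⟩

end Slice

theorem eventually_of_prod_coord [Nonempty ι] {P : ℂ → Prop}
    (h : ∀ᶠ z : ι → ℂ in 𝓝 0, P (∏ i, z i)) : ∀ᶠ t in 𝓝 0, P t := by
  classical
  obtain ⟨δ, hδ, hslice⟩ := exists_eventually_slice h (Classical.arbitrary ι)
  exact hslice.mono fun t ht => by rwa [prod_slice hδ] at ht

theorem exists_eq_comp_prod_coord [DecidableEq ι] {G : (ι → ℂ) → ℂ} (hG : AnalyticAt ℂ G 0) (N : ι)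
    (hinv : ∀ k, IsRotInvariant (dir N k) G) :
    ∃ a, AnalyticAt ℂ a 0 ∧ G =ᶠ[𝓝 0] fun z => a (∏ i, z i) := by
  have : Nonempty ι := ⟨N⟩
  obtain ⟨r, hr, hball⟩ := Metric.eventually_nhds_iff_ball.1 (hG.eventually_analyticAt.and
    (eventually_all.2 fun k => (hinv k).eulerDeriv_eq_zero hG))
  have hmem : ∀ᶠ z in 𝓝 (0 : ι → ℂ), z ∈ Metric.ball 0 r := Metric.ball_mem_nhds 0 hr
  obtain ⟨δ, hδ, hslice⟩ := exists_eventually_slice hmem N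
  have ha : AnalyticAt ℂ (fun t => G (slice N δ t)) 0 :=
    (hball _ hslice.self_of_nhds).1.fun_comp (analyticAt_slice δ 0)
  refine ⟨_, ha, eventuallyEq_of_eventually_coord_ne_zero
    hG.eventually_continuousAt (analyticAt_comp_prod_coord ha).eventually_continuousAt ?_⟩
  filter_upwards [hmem, tendsto_prod_coord.eventually hslice] with z hz hslice hz0
  exact eq_of_prod_eq_of_eulerDeriv_dir
    (fun y hy => (hball y hy).1.differentiableAt.differentiableWithinAt)
    (fun y hy => (hball y hy).2) hslice hz hz0 (prod_slice hδ _)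

theorem jacobianDet_shear_eq_deriv [Nonempty ι] {d : ι → ℤ} (hd : ∑ i, d i ≠ 0)
    {v : (ι → ℂ) → ℂ} (hv : AnalyticAt ℂ v 0) {lam : ℂ → ℂ} (hlam : AnalyticAt ℂ lam 0)
    (h : ∀ᶠ z in 𝓝 0, ∏ i, shear d v z i = lam (∏ i, z i)) :
    jacobianDet (shear d v) =ᶠ[𝓝 0] fun z => deriv lam (∏ i, z i) := by
  have hd' : ∑ i, (d i : ℂ) ≠ 0 := mod_cast hd
  refine eventuallyEq_of_eventually_coord_ne_zero
    (analyticAt_jacobianDet (analyticAt_shear hv)).eventually_continuousAt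
    (analyticAt_comp_prod_coord hlam.deriv).eventually_continuousAt ?_
  filter_upwards [hv.eventually_analyticAt, h.eventually_nhds,
    eulerDeriv_comp_shear (d := d) (analyticAt_prod_coord 0) hv,
    tendsto_prod_coord.eventually hlam.eventually_analyticAt] with z hvz hz hchain hlamz hz0
  have hprod : ∏ i, z i ≠ 0 := Finset.prod_ne_zero_iff.2 fun i _ => hz0 i
  -- differentiate `∏ i, shear d v z i = lam (∏ i, z i)` along `∑ d_i z_i ∂/∂z_i`
  rw [eulerDeriv, EventuallyEq.fderiv_eq hz, ← eulerDeriv,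
    eulerDeriv_comp_prod_coord d hlamz.differentiableAt, eulerDeriv_prod_coord, prod_shear]
    at hchain
  rw [jacobianDet_shear hvz.differentiableAt]
  refine mul_right_cancel₀ (mul_ne_zero hd' hprod) ?_
  linear_combination -hchain

end ProdCoord

/-! ### Existence of the normal form -/

theorem exists_primitive {a : ℂ → ℂ} {x : ℂ} (ha : AnalyticAt ℂ a x) :
    ∃ lam, AnalyticAt ℂ lam x ∧ lam x = 0 ∧ deriv lam =ᶠ[𝓝 x] a := by
  obtain ⟨r, hr, hball⟩ := Metric.eventually_nhds_iff_ball.1 ha.eventually_analyticAt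
  have hdiff : DifferentiableOn ℂ a (Metric.ball x r) :=
    fun t ht => (hball t ht).differentiableAt.differentiableWithinAt
  obtain ⟨lam, h0, hlam⟩ := hdiff.isExactOn_ball.with_val_at x 0
  have mem_ball := Metric.ball_mem_nhds x hr
  refine ⟨lam, Complex.analyticAt_iff_eventually_differentiableAt.2 ?_, h0, ?_⟩
  · filter_upwards [mem_ball] with t ht using (hlam t ht).differentiableAt
  · filter_upwards [mem_ball] with t ht using (hlam t ht).deriv

namespace IsGermAuto
variable {lam : ℂ → ℂ}

theorem tendsto (h : IsGermAuto lam) : Tendsto lam (𝓝 0) (𝓝 0) := by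
  simpa [h.2.1] using h.1.continuousAt.tendsto

theorem exists_inverse (h : IsGermAuto lam) :
    ∃ ψ, IsGermAuto ψ ∧ (∀ᶠ t in 𝓝 0, ψ (lam t) = t) ∧ ∀ᶠ t in 𝓝 0, lam (ψ t) = t := by
  obtain ⟨hlam, h0, hderiv⟩ := h
  have hstrict : HasStrictDerivAt lam (deriv lam 0) 0 := hlam.hasStrictDerivAt
  have inverse_an := hlam.analyticAt_localInverse hderiv
  have left_inv := hstrict.eventually_left_inverse hderiv
  have right_inv := hstrict.eventually_right_inverse hderiv
  have inverse_deriv := (hstrict.to_localInverse hderiv).hasDerivAt.deriv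
  have inverse_zero := left_inv.self_of_nhds
  rw [h0] at inverse_an right_inv inverse_deriv inverse_zero
  exact ⟨_, ⟨inverse_an, inverse_zero, inverse_deriv ▸ inv_ne_zero hderiv⟩, left_inv, right_inv⟩

theorem exists_eq_mul_exp (h : IsGermAuto lam) :
    ∃ w, AnalyticAt ℂ w 0 ∧ ∀ᶠ t in 𝓝 0, lam t = t * Complex.exp (w t) := by
  obtain ⟨⟨q, hq⟩, h0, hderiv⟩ := h
  obtain ⟨w, hw, hexp⟩ := exists_eq_exp (u := dslope lam 0) ⟨_, hq.has_fpower_series_dslope_fslope⟩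
    (by rwa [dslope_same])
  refine ⟨w, hw, hexp.mono fun t ht => ?_⟩
  rw [← ht]
  simpa [h0] using (sub_smul_dslope lam 0 t).symm

theorem exists_isGermBiholo_jacobianDet_eq_deriv {n : ℕ} [NeZero n] (h : IsGermAuto lam) :
    ∃ φ φι : (Fin n → ℂ) → (Fin n → ℂ), IsGermBiholo φ φι ∧
      (jacobianDet φ =ᶠ[𝓝 0] fun z => deriv lam (∏ i, z i)) ∧
      ∀ᶠ z in 𝓝 0, ∏ i, φ z i = lam (∏ i, z i) := by
  obtain ⟨w, hw, hexp⟩ := h.exists_eq_mul_exp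
  let d : Fin n → ℤ := Pi.single 0 1
  have hd : ∑ i, d i = 1 := by simp [d]
  have hd' : ∑ i, (d i : ℂ) = 1 := mod_cast hd
  have hv := analyticAt_comp_prod_coord (ι := Fin n) hw
  have hprod : ∀ᶠ z in 𝓝 0, ∏ i, shear d (fun z => w (∏ i, z i)) z i = lam (∏ i, z i) := by
    filter_upwards [tendsto_prod_coord.eventually hexp] with z hz
    rw [prod_shear, hd', mul_one, hz, mul_comm]
  obtain ⟨φι, hφ⟩ := exists_isGermBiholo_shear d hv
  exact ⟨_, φι, hφ, jacobianDet_shear_eq_deriv (by simp [hd]) hv h.1 hprod, hprod⟩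

end IsGermAuto

theorem exists_isGermBiholo_jacobianDet_eq {n : ℕ} [NeZero n] {g : (Fin n → ℂ) → ℂ}
    (hg : AnalyticAt ℂ g 0) (h0 : g 0 ≠ 0) :
    ∃ χ χι, IsGermBiholo χ χι ∧ jacobianDet χ =ᶠ[𝓝 0] g ∧
      ∃ lam, IsGermAuto lam ∧ ∀ᶠ z in 𝓝 0, ∏ i, χ z i = lam (∏ i, z i) := by
  let l : List (Fin n → ℤ) := (List.finRange n).map (dir 0)
  obtain ⟨χ, χι, hχ, hprod, hdensity⟩ := exists_isGermBiholo_jacobianDet_mul_iterAvg_eq hg h0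
    (l := l) (by simp [l, sum_dir])
  obtain ⟨a, ha, hinv⟩ := exists_eq_comp_prod_coord (analyticAt_iterAvg hg l) 0
    fun k => isRotInvariant_iterAvg (by simp [l]) g
  obtain ⟨lam, hlam, hlam0, hprim⟩ := exists_primitive ha
  have hauto : IsGermAuto lam := by
    refine ⟨hlam, hlam0, ?_⟩
    have := hinv.self_of_nhds
    simp only [iterAvg_apply_zero, prod_coord_zero] at this
    rwa [hprim.self_of_nhds, ← this]
  obtain ⟨φ, φι, hφ, hdet, hφprod⟩ := hauto.exists_isGermBiholo_jacobianDet_eq_deriv (n := n)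
  refine ⟨_, _, hφ.comp hχ, ?_, lam, hauto, ?_⟩
  · filter_upwards [hφ.jacobianDet_comp hχ, hdensity, hχ.tendsto.eventually hdet,
      hχ.tendsto.eventually hinv, hχ.tendsto.eventually (tendsto_prod_coord.eventually hprim)]
      with z hcomp hdensity hdet hinv hprim
    rw [hcomp, hdet, hprim, ← hinv, ← hdensity, mul_comm]
  · filter_upwards [hχ.tendsto.eventually hφprod] with z hz
    rw [hz, hprod]

/-! ### Maps preserving the coordinate hyperplanes -/

section ExpMul
variable {n : ℕ} {N : Fin n} {lam : ℂ → ℂ}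

theorem analyticAt_expMul {ι : Type*} [Fintype ι] {V : (ι → ℂ) → ι → ℂ} {x : ι → ℂ}
    (hV : AnalyticAt ℂ V x) : AnalyticAt ℂ (fun z => expMul (V z) z) x :=
  analyticAt_pi_iff.2 fun i => (analyticAt_pi_iff.1 hV i).cexp.mul (analyticAt_coord i x)

theorem exists_expMul_eq_comp_shear {V : (Fin n → ℂ) → Fin n → ℂ} {v : (Fin n → ℂ) → ℂ}
    (hV : AnalyticAt ℂ V 0) (hv : AnalyticAt ℂ v 0) (d : Fin n → ℤ) :
    ∃ W : (Fin n → ℂ) → Fin n → ℂ, AnalyticAt ℂ W 0 ∧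
      (∀ i, (∀ᶠ z in 𝓝 0, V z i = v z * d i) → ∀ᶠ z in 𝓝 0, W z i = 0) ∧
      ∀ᶠ z in 𝓝 0, expMul (V z) z = expMul (W (shear d v z)) (shear d v z) := by
  obtain ⟨φι, hφ⟩ := exists_isGermBiholo_shear d hv
  have hdiff : AnalyticAt ℂ (fun z i => V z i - v z * d i) 0 :=
    analyticAt_pi_iff.2 fun i => (analyticAt_pi_iff.1 hV i).sub (hv.mul analyticAt_const)
  refine ⟨_, hφ.symm.analyticAt_comp hdiff, fun i hi => ?_, ?_⟩
  · exact (hφ.symm.tendsto.eventually hi).mono fun z hz => sub_eq_zero.2 hz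
  · filter_upwards [hφ.eventually_left_inv] with z hz
    rw [hz, shear, ← expMul_add]
    congr 1
    ext i
    simp

theorem jacobianDet_expMul_eq_deriv {V : (Fin n → ℂ) → Fin n → ℂ} (hV : AnalyticAt ℂ V 0)
    (hlam : AnalyticAt ℂ lam 0) (hV0 : ∀ i, i ≠ N → ∀ᶠ z in 𝓝 0, V z i = 0)
    (hprod : ∀ᶠ z in 𝓝 0, ∏ i, expMul (V z) z i = lam (∏ i, z i)) :
    jacobianDet (fun z => expMul (V z) z) =ᶠ[𝓝 0] fun z => deriv lam (∏ i, z i) := by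
  have : Nonempty (Fin n) := ⟨N⟩
  have hshear : (fun z => expMul (V z) z) =ᶠ[𝓝 0] shear (Pi.single N 1) fun z => V z N := by
    filter_upwards [eventually_all.2 fun i => eventually_all.2 (hV0 i)] with z hz
    rw [shear]
    congr 1
    ext i
    rcases eq_or_ne i N with rfl | hi
    · simp
    · simp [hz i hi, hi]
  refine (jacobianDet_congr hshear).trans
    (jacobianDet_shear_eq_deriv (by simp) (analyticAt_pi_iff.1 hV N) hlam ?_)
  filter_upwards [hshear, hprod] with z hz hprod
  rw [← hz, hprod]

theorem iterAvg_jacobianDet_expMul (hlam : AnalyticAt ℂ lam 0) (l : List (Fin n))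
    {V : (Fin n → ℂ) → Fin n → ℂ} (hV : AnalyticAt ℂ V 0)
    (hV0 : ∀ i, i ∉ l → i ≠ N → ∀ᶠ z in 𝓝 0, V z i = 0)
    (hprod : ∀ᶠ z in 𝓝 0, ∏ i, expMul (V z) z i = lam (∏ i, z i)) :
    iterAvg (l.map (dir N)) (jacobianDet fun z => expMul (V z) z) =ᶠ[𝓝 0]
      fun z => deriv lam (∏ i, z i) := by
  induction l generalizing V with
  | nil => exact jacobianDet_expMul_eq_deriv hV hlam (fun i => hV0 i (by simp)) hprod
  | cons k l ih =>
    have hv : AnalyticAt ℂ (fun z => V z k) 0 := analyticAt_pi_iff.1 hV k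
    obtain ⟨φι, hφ⟩ := exists_isGermBiholo_shear (dir N k) hv
    obtain ⟨W, hW, hW0, hfactor⟩ := exists_expMul_eq_comp_shear hV hv (dir N k)
    have hVan := analyticAt_jacobianDet (analyticAt_expMul hV)
    have hWan := analyticAt_jacobianDet (analyticAt_expMul hW)
    have ihW : iterAvg (l.map (dir N)) (jacobianDet fun z => expMul (W z) z) =ᶠ[𝓝 0]
        fun z => deriv lam (∏ i, z i) := by
      refine ih hW (fun i hil hiN => hW0 i ?_) (hφ.eventually_of_comp ?_)
      · rcases eq_or_ne i k with rfl | hik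
        · simp [dir, hiN]
        · simpa [dir, hiN, hik] using hV0 i (by simp [hik, hil]) hiN
      · filter_upwards [hfactor, hprod] with z hz hprod
        rw [← hz, hprod, prod_shear_of_sum_eq_zero (sum_dir N k)]
    have hstep : avg (dir N k) (jacobianDet fun z => expMul (V z) z) =ᶠ[𝓝 0]
        avg (dir N k) (jacobianDet fun z => expMul (W z) z) :=
      (avg_congr (jacobianDet_congr hfactor)).trans
        (avg_jacobianDet_comp_shear (sum_dir N k) (analyticAt_expMul hW) hv)
    calc iterAvg ((k :: l).map (dir N)) (jacobianDet fun z => expMul (V z) z)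
        =ᶠ[𝓝 0] iterAvg (l.map (dir N)) (avg (dir N k) (jacobianDet fun z => expMul (V z) z)) :=
          avg_iterAvg hVan _ _
      _ =ᶠ[𝓝 0] iterAvg (l.map (dir N)) (avg (dir N k) (jacobianDet fun z => expMul (W z) z)) :=
          iterAvg_congr hstep _
      _ =ᶠ[𝓝 0] avg (dir N k) (iterAvg (l.map (dir N)) (jacobianDet fun z => expMul (W z) z)) :=
          (avg_iterAvg hWan _ _).symm
      _ =ᶠ[𝓝 0] avg (dir N k) fun z => deriv lam (∏ i, z i) := avg_congr ihW
      _ =ᶠ[𝓝 0] fun z => deriv lam (∏ i, z i) :=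
          (isRotInvariant_comp_prod_coord (sum_dir N k) (deriv lam)).avg_eq

theorem eventually_eq_const_mul_of_deriv (hlam : AnalyticAt ℂ lam 0) (h0 : lam 0 = 0) {c : ℂ}
    (h : ∀ᶠ t in 𝓝 0, deriv lam t = c) : ∀ᶠ t in 𝓝 0, lam t = c * t := by
  obtain ⟨r, hr, hball⟩ := Metric.eventually_nhds_iff_ball.1 (h.and hlam.eventually_analyticAt)
  filter_upwards [Metric.ball_mem_nhds 0 hr] with t ht
  refine Metric.isOpen_ball.eqOn_of_deriv_eq (g := fun t => c * t) (𝕜 := ℂ)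
    (convex_ball (0 : ℂ) r).isPreconnected
    (fun x hx => (hball x hx).2.differentiableAt.differentiableWithinAt)
    (differentiable_id.const_mul c).differentiableOn (fun x hx => ?_) (Metric.mem_ball_self hr)
    (by simp [h0]) ht
  rw [(hball x hx).1]
  simp

theorem eq_const_mul_of_jacobianDet_expMul [NeZero n] {V : (Fin n → ℂ) → Fin n → ℂ}
    (hV : AnalyticAt ℂ V 0) (hlam : AnalyticAt ℂ lam 0) (h0 : lam 0 = 0)
    (hprod : ∀ᶠ z in 𝓝 0, ∏ i, expMul (V z) z i = lam (∏ i, z i)) {c : ℂ}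
    (hdet : ∀ᶠ z in 𝓝 0, jacobianDet (fun z => expMul (V z) z) z = c) :
    ∀ᶠ t in 𝓝 0, lam t = c * t := by
  refine eventually_eq_const_mul_of_deriv hlam h0 (eventually_of_prod_coord (ι := Fin n) ?_)
  filter_upwards [iterAvg_jacobianDet_expMul (N := 0) hlam (List.finRange n) hV
    (fun i hi => absurd (List.mem_finRange i) hi) hprod,
    iterAvg_congr hdet ((List.finRange n).map (dir 0))] with z hderiv hconst
  rw [← hderiv, hconst, iterAvg_const]

end ExpMul

section Permutation
variable {ι : Type*} [Fintype ι] {χ : (ι → ℂ) → (ι → ℂ)} {lam : ℂ → ℂ}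

theorem jacobianDet_perm [DecidableEq ι] {z : ι → ℂ} (hχ : DifferentiableAt ℂ χ z)
    (e : Equiv.Perm ι) :
    jacobianDet (fun y j => χ y (e j)) z = Equiv.Perm.sign e * jacobianDet χ z := by
  have hderiv : HasFDerivAt (fun y j => χ y (e j)) (ContinuousLinearMap.pi fun j =>
      (ContinuousLinearMap.proj (R := ℂ) (φ := fun _ : ι => ℂ) (e j)) ∘L fderiv ℂ χ z) z :=
    hasFDerivAt_pi.2 fun j =>
      (ContinuousLinearMap.proj (R := ℂ) (φ := fun _ : ι => ℂ) (e j)).hasFDerivAt.comp z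
        hχ.hasFDerivAt
  rw [jacobianDet, jacobianDet, hderiv.fderiv, ← LinearMap.det_toMatrix',
    ← LinearMap.det_toMatrix', ← Matrix.det_permute]
  congr 1

theorem exists_eventually_apply_update_eq_zero [DecidableEq ι] (hχ : AnalyticAt ℂ χ 0)
    (h0 : lam 0 = 0) (hprod : ∀ᶠ z in 𝓝 0, ∏ i, χ z i = lam (∏ i, z i)) (j : ι) :
    ∃ i, ∀ᶠ z in 𝓝 0, χ (Function.update z j 0) i = 0 := by
  have hupdate : AnalyticAt ℂ (fun z : ι → ℂ => Function.update z j 0) 0 := by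
    refine analyticAt_pi_iff.2 fun i => ?_
    rcases eq_or_ne i j with rfl | hi
    · simpa using analyticAt_const
    · simpa [hi] using analyticAt_coord i 0
  have update_zero : Function.update (0 : ι → ℂ) j 0 = 0 := by simp
  have hcomp (i : ι) : AnalyticAt ℂ (fun z => χ (Function.update z j 0) i) 0 :=
    AnalyticAt.fun_comp (g := fun z => χ z i)
      (by rw [update_zero]; exact analyticAt_pi_iff.1 hχ i) hupdate
  have htendsto : Tendsto (fun z : ι → ℂ => Function.update z j 0) (𝓝 0) (𝓝 0) := by
    simpa using hupdate.continuousAt.tendsto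
  obtain ⟨i, -, hi⟩ := exists_eventually_eq_zero_of_prod hcomp Finset.univ (by
    filter_upwards [htendsto.eventually hprod] with z hz
    rw [hz, Finset.prod_eq_zero (Finset.mem_univ j) (by simp), h0])
  exact ⟨i, hi⟩

theorem fderiv_apply_of_eq_coord_mul {h u : (ι → ℂ) → ℂ} {j : ι} (hu : DifferentiableAt ℂ u 0)
    (hhu : ∀ᶠ z in 𝓝 0, h z = z j * u z) (y : ι → ℂ) : fderiv ℂ h 0 y = u 0 * y j := by
  have hcoord : HasFDerivAt (fun z : ι → ℂ => z j) (ContinuousLinearMap.proj j) 0 :=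
    (ContinuousLinearMap.proj (R := ℂ) (φ := fun _ : ι => ℂ) j).hasFDerivAt
  rw [((hcoord.mul hu.hasFDerivAt).congr_of_eventuallyEq hhu).fderiv]
  simp

theorem exists_perm_eq_coord_mul (hχ : AnalyticAt ℂ χ 0) (hdet : jacobianDet χ 0 ≠ 0)
    (h0 : lam 0 = 0) (hprod : ∀ᶠ z in 𝓝 0, ∏ i, χ z i = lam (∏ i, z i)) :
    ∃ (e : Equiv.Perm ι) (u : ι → (ι → ℂ) → ℂ),
      ∀ j, AnalyticAt ℂ (u j) 0 ∧ u j 0 ≠ 0 ∧ ∀ᶠ z in 𝓝 0, χ z (e j) = z j * u j z := by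
  classical
  choose π hπ using exists_eventually_apply_update_eq_zero hχ h0 hprod
  choose u hu hχu using fun j => exists_eq_coord_mul (analyticAt_pi_iff.1 hχ (π j)) j (hπ j)
  have row (j : ι) (y : ι → ℂ) : fderiv ℂ χ 0 y (π j) = u j 0 * y j := by
    rw [← fderiv_apply_of_eq_coord_mul (hu j).differentiableAt (hχu j),
      fderiv_apply hχ.differentiableAt]
    rfl
  have hu0 (j : ι) : u j 0 ≠ 0 := fun hzero => by
    obtain ⟨y, hy⟩ := (LinearMap.equivOfDetNeZero _ hdet).surjective (Pi.single (π j) 1)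
    have hy' : fderiv ℂ χ 0 y = Pi.single (π j) 1 := hy
    simpa [hy', hzero] using row j y
  have hinj : Function.Injective π := fun j m hjm => by
    by_contra hne
    have hrow := (row j (Pi.single j 1)).symm.trans (hjm ▸ row m (Pi.single j 1))
    simp [Ne.symm hne, hu0] at hrow
  exact ⟨.ofBijective π (Finite.injective_iff_bijective.1 hinj), u,
    fun j => ⟨hu j, hu0 j, hχu j⟩⟩

theorem exists_perm_eq_expMul (hχ : AnalyticAt ℂ χ 0) (hdet : jacobianDet χ 0 ≠ 0)
    (h0 : lam 0 = 0) (hprod : ∀ᶠ z in 𝓝 0, ∏ i, χ z i = lam (∏ i, z i)) :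
    ∃ (e : Equiv.Perm ι) (V : (ι → ℂ) → ι → ℂ), AnalyticAt ℂ V 0 ∧
      (fun z j => χ z (e j)) =ᶠ[𝓝 0] fun z => expMul (V z) z := by
  obtain ⟨e, u, hu⟩ := exists_perm_eq_coord_mul hχ hdet h0 hprod
  choose w hw huw using fun j => exists_eq_exp (hu j).1 (hu j).2.1
  refine ⟨e, fun z j => w j z, analyticAt_pi_iff.2 hw, ?_⟩
  filter_upwards [eventually_all.2 fun j => (hu j).2.2, eventually_all.2 huw] with z hχz huz
  ext j
  rw [hχz, huz, mul_comm, expMul]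

theorem eq_or_eq_neg_of_isVolumePreserving {n : ℕ} [NeZero n] {χ : (Fin n → ℂ) → (Fin n → ℂ)}
    (hχ : AnalyticAt ℂ χ 0) (hvol : IsVolumePreserving χ) (hlam : AnalyticAt ℂ lam 0)
    (h0 : lam 0 = 0) (hprod : ∀ᶠ z in 𝓝 0, ∏ i, χ z i = lam (∏ i, z i)) :
    (∀ᶠ t in 𝓝 0, lam t = t) ∨ ∀ᶠ t in 𝓝 0, lam t = -t := by
  have hdet : jacobianDet χ =ᶠ[𝓝 0] 1 := hvol
  obtain ⟨e, V, hV, heV⟩ := exists_perm_eq_expMul hχ (by simp [hdet.self_of_nhds]) h0 hprod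
  have hlinear : ∀ᶠ t in 𝓝 0, lam t = (Equiv.Perm.sign e : ℤ) * t := by
    refine eq_const_mul_of_jacobianDet_expMul hV hlam h0 ?_ ?_
    · filter_upwards [heV, hprod] with z hz hprod
      rw [← hz, ← hprod]
      exact Equiv.prod_comp e (χ z)
    · filter_upwards [jacobianDet_congr heV, hχ.eventually_analyticAt, hdet] with z hz hχz hdetz
      rw [← hz, jacobianDet_perm hχz.differentiableAt, hdetz, Pi.one_apply, mul_one]
  rcases Int.units_eq_one_or (Equiv.Perm.sign e) with hsign | hsign
  · exact .inl (by simpa [hsign] using hlinear)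
  · exact .inr (by simpa [hsign] using hlinear)

end Permutation

/-! ### Volume-preserving normal forms -/

theorem IsVolumePreserving.comp {n : ℕ} {φ φι χ χι : (Fin n → ℂ) → (Fin n → ℂ)}
    (hφ : IsGermBiholo φ φι) (hχ : IsGermBiholo χ χι) (hφv : IsVolumePreserving φ)
    (hχv : IsVolumePreserving χ) : IsVolumePreserving fun z => φ (χ z) := by
  filter_upwards [hφ.jacobianDet_comp hχ, hχ.tendsto.eventually hφv, hχv] with z hcomp hφz hχz
  exact hcomp.trans (by rw [jacobianDet, jacobianDet, hφz, hχz, one_mul])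

theorem IsVolumePreserving.symm {n : ℕ} {φ φι : (Fin n → ℂ) → (Fin n → ℂ)}
    (hφ : IsGermBiholo φ φι) (hφv : IsVolumePreserving φ) : IsVolumePreserving φι := by
  filter_upwards [hφ.jacobianDet_mul_jacobianDet_symm, hφ.symm.tendsto.eventually hφv]
    with z hmul hφz
  rwa [jacobianDet, hφz, one_mul] at hmul

/-- The germ `f` takes the form `Ψ(z₁ ⋯ zₙ)` in the volume-preserving coordinates `Φ`, whose inverse
is `Φι`. -/
structure IsVolumeNormalForm {n : ℕ} (f : (Fin n → ℂ) → ℂ) (Φ Φι : (Fin n → ℂ) → (Fin n → ℂ))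
    (Ψ : ℂ → ℂ) : Prop where
  biholo : IsGermBiholo Φ Φι
  volumePreserving : IsVolumePreserving Φ
  auto : IsGermAuto Ψ
  apply_inv : ∀ᶠ z in 𝓝 0, f (Φι z) = Ψ (∏ i, z i)

section NormalForm
variable {n : ℕ} {f : (Fin n → ℂ) → ℂ}

theorem exists_isVolumeNormalForm [NeZero n] {σ σι : (Fin n → ℂ) → (Fin n → ℂ)}
    (hσ : IsGermBiholo σ σι) (hf : ∀ᶠ z in 𝓝 0, f (σι z) = ∏ i, z i) :
    ∃ Φ Φι Ψ, IsVolumeNormalForm f Φ Φι Ψ := by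
  have hdet := hσ.symm.jacobianDet_mul_jacobianDet_symm
  obtain ⟨χ, χι, hχ, hχdet, lam, hlam, hχprod⟩ := exists_isGermBiholo_jacobianDet_eq
    (analyticAt_jacobianDet hσ.symm.analyticAt)
    (left_ne_zero_of_mul_eq_one (hσ.map_zero ▸ hdet.self_of_nhds))
  obtain ⟨Ψ, hΨ, hΨlam, -⟩ := hlam.exists_inverse
  refine ⟨_, _, Ψ, hχ.comp hσ, ?_, hΨ, hχ.eventually_of_comp ?_⟩
  · filter_upwards [hχ.jacobianDet_comp hσ, hσ.tendsto.eventually hχdet, hdet]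
      with z hcomp hχz hσz
    exact hcomp.trans (hχz ▸ hσz)
  · filter_upwards [hf, hχprod, hχ.eventually_left_inv, tendsto_prod_coord.eventually hΨlam]
      with z hfz hprod hinv hΨz
    rw [hinv, hfz, hprod, hΨz]

namespace IsVolumeNormalForm
variable {Φ Φι Φ' Φι' : (Fin n → ℂ) → (Fin n → ℂ)} {Ψ Ψ' : ℂ → ℂ}

theorem eventually_eq (h : IsVolumeNormalForm f Φ Φι Ψ) :
    ∀ᶠ z in 𝓝 0, f z = Ψ (∏ i, Φ z i) := by
  filter_upwards [h.biholo.eventually_left_inv, h.biholo.tendsto.eventually h.apply_inv]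
    with z hinv hz
  rw [← hz, hinv]

theorem eq_or_eq_comp_neg [NeZero n] (h : IsVolumeNormalForm f Φ Φι Ψ)
    (h' : IsVolumeNormalForm f Φ' Φι' Ψ') :
    (∀ᶠ t in 𝓝 0, Ψ' t = Ψ t) ∨ ∀ᶠ t in 𝓝 0, Ψ' t = Ψ (-t) := by
  obtain ⟨ψ, hψ, hψΨ', hΨ'ψ⟩ := h'.auto.exists_inverse
  have hχ := h'.biholo.comp h.biholo.symm
  have hvol := h'.volumePreserving.comp h'.biholo h.biholo.symm (h.volumePreserving.symm h.biholo)
  have hlam : AnalyticAt ℂ (fun t => ψ (Ψ t)) 0 :=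
    AnalyticAt.fun_comp (by rw [h.auto.2.1]; exact hψ.1) h.auto.1
  have hlam0 : ψ (Ψ 0) = 0 := by rw [h.auto.2.1, hψ.2.1]
  have hprod : ∀ᶠ z in 𝓝 0, ∏ i, Φ' (Φι z) i = ψ (Ψ (∏ i, z i)) := by
    filter_upwards [h.apply_inv, h.biholo.symm.tendsto.eventually h'.eventually_eq,
      hχ.tendsto.eventually (tendsto_prod_coord.eventually hψΨ')] with z hz hz' hψz
    rw [← hz, hz', hψz]
  have hΨ : ∀ᶠ t in 𝓝 0, Ψ' (ψ (Ψ t)) = Ψ t := h.auto.tendsto.eventually hΨ'ψ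
  rcases eq_or_eq_neg_of_isVolumePreserving hχ.analyticAt hvol hlam hlam0 hprod with hid | hneg
  · left
    filter_upwards [hid, hΨ] with t ht hΨt
    rwa [ht] at hΨt
  · right
    have tendsto_neg : Tendsto (fun t : ℂ => -t) (𝓝 0) (𝓝 0) := by
      simpa using (continuous_neg (G := ℂ)).tendsto 0
    filter_upwards [tendsto_neg.eventually hneg, tendsto_neg.eventually hΨ] with t ht hΨt
    rwa [ht, neg_neg] at hΨt

end IsVolumeNormalForm

theorem stmt_3_general [NeZero n] {σ σι : (Fin n → ℂ) → (Fin n → ℂ)} (hσ : IsGermBiholo σ σι)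
    (hf : ∀ᶠ z in 𝓝 0, f (σι z) = ∏ i, z i) :
    ∃ Φ Φι Ψ, IsVolumeNormalForm f Φ Φι Ψ ∧
      (∀ᶠ z in 𝓝 0, ((f z).re = 0 ↔ (Ψ (∏ i, Φ z i)).re = 0)) ∧
      ∀ Φ' Φι' Ψ', IsVolumeNormalForm f Φ' Φι' Ψ' →
        (∀ᶠ t in 𝓝 0, Ψ' t = Ψ t) ∨ ∀ᶠ t in 𝓝 0, Ψ' t = Ψ (-t) := by
  obtain ⟨Φ, Φι, Ψ, h⟩ := exists_isVolumeNormalForm hσ hf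
  exact ⟨Φ, Φι, Ψ, h, h.eventually_eq.mono fun z hz => by rw [hz],
    fun _ _ _ h' => h.eq_or_eq_comp_neg h'⟩

end NormalForm

/-- **Corollary 1.** If moreover `f` is right equivalent to the product of all
coordinates, then `M` has the volume-preserving normal form `{Re(Ψ(z₁⋯zₙ)) = 0}`,
with `Ψ` uniquely determined by `f` up to a sign. -/
theorem stmt_3 (n : ℕ) (hn : 2 ≤ n) (f : (Fin n → ℂ) → ℂ)
    (hf : AnalyticAt ℂ f 0)
    -- `f(z) = z₁ ⋯ zₙ + O(|z|^{n+1})`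
    (hford : (fun z : Fin n → ℂ => f z - ∏ i, z i) =O[𝓝 0] fun z => ‖z‖ ^ (n + 1))
    -- `f` is right equivalent to the product of all coordinates
    (hre : ∃ σ σι : (Fin n → ℂ) → (Fin n → ℂ), IsGermBiholo σ σι ∧
      ∀ᶠ z in 𝓝 (0 : Fin n → ℂ), f (σι z) = ∏ i, z i) :
    ∃ Φ Φι : (Fin n → ℂ) → (Fin n → ℂ), IsGermBiholo Φ Φι ∧ IsVolumePreserving Φ ∧
    ∃ Ψ : ℂ → ℂ, IsGermAuto Ψ ∧
      -- `f ∘ Φ⁻¹ = Ψ(z₁ ⋯ zₙ)`, hence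
      (∀ᶠ z in 𝓝 (0 : Fin n → ℂ), f (Φι z) = Ψ (∏ i, z i)) ∧
      -- `Φ(M) = {Re(Ψ(z₁ ⋯ zₙ)) = 0}` as germs of sets at `0`, where `M = {Re f = 0}`
      (∀ᶠ z in 𝓝 (0 : Fin n → ℂ), ((f z).re = 0 ↔ (Ψ (∏ i, Φ z i)).re = 0)) ∧
      -- `Ψ` is uniquely determined by `f` up to a sign
      (∀ Φ' Φι' : (Fin n → ℂ) → (Fin n → ℂ), ∀ Ψ' : ℂ → ℂ,
        IsGermBiholo Φ' Φι' → IsVolumePreserving Φ' → IsGermAuto Ψ' →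
        (∀ᶠ z in 𝓝 (0 : Fin n → ℂ), f (Φι' z) = Ψ' (∏ i, z i)) →
        (∀ᶠ t in 𝓝 (0 : ℂ), Ψ' t = Ψ t) ∨ (∀ᶠ t in 𝓝 (0 : ℂ), Ψ' t = Ψ (-t))) := by
  have : NeZero n := ⟨by omega⟩
  obtain ⟨σ, σι, hσ, hfσ⟩ := hre
  obtain ⟨Φ, Φι, Ψ, h, hzero, huniq⟩ := stmt_3_general hσ hfσ
  exact ⟨Φ, Φι, h.biholo, h.volumePreserving, Ψ, h.auto, h.apply_inv, hzero,
    fun Φ' Φι' Ψ' hΦ' hvol' hΨ' hf' => huniq Φ' Φι' Ψ' ⟨hΦ', hvol', hΨ', hf'⟩⟩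
end

section
/- Let M = {F = 0} be a germ of an irreducible singular real-analytic Levi-flat hypersurface at 0 ∈ ℂ² with F(z) = Re(Q(z)) + H(z, z̄), where Q is a quasihomogeneous polynomial of type (a,b) with gcd(a,b) = 1 and quasihomogeneous degree d, having an isolated singularity at 0 ∈ ℂ², and H is real-analytic with all Taylor monomials of weighted degree strictly greater than d and H(z, z̄) = conj(H(z̄, z)). Then the algebraic dimension of Sing(M) is 0; that is, there is a neighborhood of 0 ∈ ℂ⁴ in which the origin is the only common zero of F_ℂ and dF_ℂ, so Sing(M_ℂ) = {0} as a germ at 0 ∈ ℂ⁴. -/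
open Filter Topology

/-- `FC` is the complexification of `F`: the (unique) germ of holomorphic function at
`0 ∈ ℂⁿ × ℂⁿ` such that `FC (z, z̄) = F z` near `0`. -/
def IsComplexification {n : ℕ} (F : (Fin n → ℂ) → ℝ)
    (FC : ((Fin n → ℂ) × (Fin n → ℂ)) → ℂ) : Prop :=
  AnalyticAt ℂ FC 0 ∧ ∀ᶠ z in 𝓝 (0 : Fin n → ℂ), FC (z, star z) = ((F z : ℝ) : ℂ)

/-- The singular set `Sing(M_ℂ) = {F_ℂ = 0} ∩ {dF_ℂ = 0}` of the complexification. -/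
def singMC {n : ℕ} (FC : ((Fin n → ℂ) × (Fin n → ℂ)) → ℂ) :
    Set ((Fin n → ℂ) × (Fin n → ℂ)) :=
  {p | FC p = 0 ∧ fderiv ℂ FC p = 0}

/-- The singular set of the complexified Levi foliation `L_ℂ`: points of
`M*_ℂ` at which `α = Σ_j (∂F_ℂ/∂z_j) dz_j` vanishes on `T_p M_ℂ = ker dF_ℂ(p)`.
Note that `α(p)(v) = dF_ℂ(p)(v₁, 0)`. -/
def singLC {n : ℕ} (FC : ((Fin n → ℂ) × (Fin n → ℂ)) → ℂ) :
    Set ((Fin n → ℂ) × (Fin n → ℂ)) :=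
  {p | FC p = 0 ∧ fderiv ℂ FC p ≠ 0 ∧
    ∀ v : (Fin n → ℂ) × (Fin n → ℂ), fderiv ℂ FC p v = 0 → fderiv ℂ FC p (v.1, 0) = 0}

/-!
Write `F_ℂ = P + G`, where `P(z, w) = (Q(z) + Q̄(w)) / 2` complexifies `Re Q` and `G` complexifies
`H`. Dilate by `t · (z, w) = (t ^ a z₁, t ^ b z₂, t ^ a w₁, t ^ b w₂)`. Then
`P(t · q) = t ^ d P(q)`, and `0` is an isolated critical point of `P` because it is one of `Q`.
The order hypothesis on `H` says that `t ↦ G(t · q)` vanishes to order at least `d + 1` when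
`q = (z, z̄)`; its Taylor coefficients are holomorphic in `q`, so this persists for every small `q`.
The Schwarz lemma in `t` and the Cauchy estimate in `q` then give
`‖d_q (G(t · q))‖ ≤ K |t| ^ (d + 1)`. A nonzero critical point of `F_ℂ` near `0` is `t · q` with
`t > 0` small and `q` on a fixed sphere, and there `‖dP(q)‖ ≤ K t`, whereas compactness of the
sphere bounds `‖dP(q)‖` from below.
-/

open Asymptotics Metric Set

/-! ### Vanishing order in one variable -/

section VanishingOrder

variable {𝕜 F : Type*} [NontriviallyNormedField 𝕜] [NormedAddCommGroup F] [NormedSpace 𝕜 F]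

theorem succ_le_analyticOrderAt_of_isLittleO_pow {g : 𝕜 → F} (hg : AnalyticAt 𝕜 g 0) {d : ℕ}
    {l : Filter 𝕜} [l.NeBot] (hl : l ≤ 𝓝[≠] 0) (h : g =o[l] fun t ↦ t ^ d) :
    ((d + 1 : ℕ) : ℕ∞) ≤ analyticOrderAt g 0 := by
  by_contra! hlt
  have hl₀ : l ≤ 𝓝 0 := hl.trans nhdsWithin_le_nhds
  obtain ⟨u, hu, hu0, hgu⟩ := hg.analyticOrderAt_ne_top.1 hlt.ne_top
  set n := analyticOrderNatAt g 0
  have hn : n ≤ d := by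
    rw [← Nat.cast_analyticOrderNatAt hlt.ne_top] at hlt
    exact Nat.lt_succ_iff.1 (by exact_mod_cast hlt)
  have hgn : g =o[l] fun t ↦ t ^ n := by
    rcases hn.eq_or_lt with hn | hn
    · rwa [hn]
    · exact h.trans ((isLittleO_pow_pow hn).mono hl₀)
  have hu_one : u =o[l] fun _ ↦ (1 : 𝕜) := by
    refine ((isBigO_refl (fun t : 𝕜 ↦ (t ^ n)⁻¹) l).smul_isLittleO hgn).congr' ?_ ?_
    · filter_upwards [hl₀ hgu, hl self_mem_nhdsWithin] with t ht ht0
      rw [ht, sub_zero, inv_smul_smul₀ (pow_ne_zero n ht0)]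
    · filter_upwards [hl self_mem_nhdsWithin] with t ht0
      exact inv_mul_cancel₀ (pow_ne_zero n ht0)
  exact hu0 (tendsto_nhds_unique (hu.continuousAt.tendsto.mono_left hl₀)
    ((isLittleO_one_iff 𝕜).1 hu_one))

theorem isLittleO_pow_of_succ_le_analyticOrderAt {g : 𝕜 → F} (hg : AnalyticAt 𝕜 g 0) {d : ℕ}
    (h : ((d + 1 : ℕ) : ℕ∞) ≤ analyticOrderAt g 0) : g =o[𝓝 0] fun t ↦ t ^ d := by
  obtain ⟨u, hu, hgu⟩ := (natCast_le_analyticOrderAt hg).1 h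
  have hpow : (fun t : 𝕜 ↦ (t - 0) ^ (d + 1) • u t) =o[𝓝 0] fun t ↦ t ^ d • (1 : 𝕜) := by
    simp only [sub_zero]
    exact (isLittleO_pow_pow d.lt_succ_self).smul_isBigO (hu.continuousAt.isBigO_one 𝕜)
  exact hpow.congr' (hgu.mono fun _ ht ↦ ht.symm) (.of_forall fun t ↦ by simp)

theorem norm_le_mul_pow_of_succ_le_analyticOrderAt {F : Type*} [NormedAddCommGroup F]
    [NormedSpace ℂ F] [CompleteSpace F] {g : ℂ → F} {r C : ℝ} {d : ℕ}
    (hg : DifferentiableOn ℂ g (ball 0 r)) (hC : ∀ t ∈ ball (0 : ℂ) r, ‖g t‖ ≤ C)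
    (hord : ((d + 1 : ℕ) : ℕ∞) ≤ analyticOrderAt g 0) {t : ℂ} (ht : t ∈ ball 0 r) :
    ‖g t‖ ≤ C * (‖t‖ / r) ^ (d + 1) := by
  have hr : 0 < r := pos_of_mem_ball ht
  have hg0 : g 0 = 0 := apply_eq_zero_of_analyticOrderAt_ne_zero fun h ↦ by simp [h] at hord
  have han : AnalyticAt ℂ g 0 := hg.analyticAt (ball_mem_nhds 0 hr)
  have hlittle := (isLittleO_pow_of_succ_le_analyticOrderAt han hord).norm_right
  simpa [hg0] using Complex.dist_le_mul_div_pow_of_mapsTo_ball_of_isLittleO hg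
    (fun s hs ↦ by simpa [hg0] using hC s hs) (by simpa [hg0] using hlittle) ht

end VanishingOrder

/-! ### Analytic functions with a distinguished variable -/

section DistinguishedVariable

variable {𝕜 E F : Type*} [NontriviallyNormedField 𝕜] [NormedAddCommGroup E] [NormedSpace 𝕜 E]
  [NormedAddCommGroup F] [NormedSpace 𝕜 F]

theorem analyticAt_slice_fst {f : 𝕜 × E → F} {x : 𝕜 × E} (hf : AnalyticAt 𝕜 f x) :
    AnalyticAt 𝕜 (fun t ↦ f (t, x.2)) x.1 :=
  hf.comp_of_eq (f := fun t ↦ (t, x.2)) (analyticAt_id.prod analyticAt_const) rfl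

theorem analyticAt_slice_snd {f : 𝕜 × E → F} {x : 𝕜 × E} (hf : AnalyticAt 𝕜 f x) :
    AnalyticAt 𝕜 (fun q ↦ f (x.1, q)) x.2 :=
  hf.comp_of_eq (f := fun q ↦ (x.1, q)) (analyticAt_const.prod analyticAt_id) rfl

theorem analyticAt_deriv_slice_fst [CompleteSpace F] {f : 𝕜 × E → F} {x : 𝕜 × E}
    (hf : AnalyticAt 𝕜 f x) : AnalyticAt 𝕜 (fun y ↦ deriv (fun t ↦ f (t, y.2)) y.1) x := by
  have hfderiv : AnalyticAt 𝕜 (fun y ↦ fderiv 𝕜 f y (1, 0)) x :=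
    ((ContinuousLinearMap.apply 𝕜 F ((1, 0) : 𝕜 × E)).analyticAt _).comp hf.fderiv
  refine hfderiv.congr ?_
  filter_upwards [hf.eventually_analyticAt] with y hy
  have hline : HasDerivAt (fun t ↦ (t, y.2)) ((1, 0) : 𝕜 × E) y.1 :=
    (hasDerivAt_id y.1).prodMk (hasDerivAt_const y.1 y.2)
  exact (hy.differentiableAt.hasFDerivAt.comp_hasDerivAt y.1 hline).deriv.symm

theorem analyticAt_iteratedDeriv_slice_fst [CompleteSpace F] {f : 𝕜 × E → F} {x : 𝕜 × E}
    (hf : AnalyticAt 𝕜 f x) (k : ℕ) :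
    AnalyticAt 𝕜 (fun y ↦ iteratedDeriv k (fun t ↦ f (t, y.2)) y.1) x := by
  induction k with
  | zero => simpa only [iteratedDeriv_zero] using hf
  | succ k ih => simpa only [iteratedDeriv_succ] using analyticAt_deriv_slice_fst ih

end DistinguishedVariable

section UniformVanishing

variable {E F : Type*} [NormedAddCommGroup E] [NormedSpace ℂ E] [NormedAddCommGroup F]
  [NormedSpace ℂ F]

theorem isBigO_pow_fst_of_eventually_succ_le_analyticOrderAt [CompleteSpace F] {f : ℂ × E → F}
    (hf : AnalyticAt ℂ f 0) {d : ℕ}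
    (hord : ∀ᶠ q in 𝓝 (0 : E), ((d + 1 : ℕ) : ℕ∞) ≤ analyticOrderAt (fun t ↦ f (t, q)) 0) :
    f =O[𝓝 0] fun x ↦ x.1 ^ (d + 1) := by
  have hbound : ∀ᶠ x in 𝓝 (0 : ℂ × E), ‖f x‖ ≤ ‖f 0‖ + 1 :=
    (hf.continuousAt.norm.eventually_lt_const (lt_add_one _)).mono fun _ h ↦ h.le
  obtain ⟨r, hr, hr_ball⟩ := eventually_nhds_iff_ball.1 (hf.eventually_analyticAt.and hbound)
  have hmem : ∀ {t : ℂ} {q : E}, t ∈ ball 0 r → q ∈ ball 0 r → (t, q) ∈ ball (0 : ℂ × E) r := by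
    intro t q ht hq
    simpa using And.intro ht hq
  refine .of_bound ((‖f 0‖ + 1) * (1 / r) ^ (d + 1)) ?_
  filter_upwards [ball_mem_nhds (0 : ℂ × E) hr, continuousAt_snd.eventually hord]
    with ⟨t, q⟩ htq hq_ord
  obtain ⟨ht, hq⟩ : t ∈ ball 0 r ∧ q ∈ ball 0 r := by simpa using htq
  have hschwarz := norm_le_mul_pow_of_succ_le_analyticOrderAt
    (fun s hs ↦ (analyticAt_slice_fst
      (hr_ball _ (hmem hs hq)).1).differentiableAt.differentiableWithinAt)
    (fun s hs ↦ (hr_ball _ (hmem hs hq)).2) hq_ord ht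
  refine hschwarz.trans_eq ?_
  rw [norm_pow, div_pow, one_div_pow]
  ring

theorem norm_fderiv_le_of_forall_mem_ball_norm_le {f : E → F} {c : E} {r C : ℝ} (hr : 0 < r)
    (hf : DifferentiableOn ℂ f (ball c r)) (hC : ∀ x ∈ ball c r, ‖f x‖ ≤ C) :
    ‖fderiv ℂ f c‖ ≤ 2 * C / r := by
  refine Complex.norm_fderiv_le_div_of_mapsTo_ball hf (fun x hx ↦ ?_) hr
  rw [mem_closedBall_iff_norm, two_mul]
  exact (norm_sub_le _ _).trans (add_le_add (hC x hx) (hC c (mem_ball_self hr)))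

theorem isBigO_fderiv_slice_snd [CompleteSpace F] {f : ℂ × E → F} (hf : AnalyticAt ℂ f 0)
    {φ : ℂ → ℂ} (h : f =O[𝓝 0] fun x ↦ φ x.1) :
    (fun x : ℂ × E ↦ fderiv ℂ (fun q ↦ f (x.1, q)) x.2) =O[𝓝 0] fun x ↦ φ x.1 := by
  obtain ⟨C, hC⟩ := h.bound
  obtain ⟨r, hr, hr_ball⟩ := eventually_nhds_iff_ball.1 (hf.eventually_analyticAt.and hC)
  refine .of_bound (2 * C / (r / 2)) ?_
  filter_upwards [ball_mem_nhds (0 : ℂ × E) (half_pos hr)] with ⟨t, q⟩ htq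
  obtain ⟨ht, hq⟩ : ‖t‖ < r / 2 ∧ ‖q‖ < r / 2 := by simpa [Prod.norm_def] using htq
  have hmem : ∀ q' ∈ ball q (r / 2), (t, q') ∈ ball (0 : ℂ × E) r := by
    intro q' hq'
    have := norm_le_norm_add_norm_sub' q' q
    rw [mem_ball_iff_norm] at hq'
    rw [mem_ball_zero_iff, Prod.norm_def, max_lt_iff]
    constructor <;> linarith
  refine (norm_fderiv_le_of_forall_mem_ball_norm_le (C := C * ‖φ t‖) (half_pos hr)
    (fun q' hq' ↦ (analyticAt_slice_snd
      (hr_ball _ (hmem q' hq')).1).differentiableAt.differentiableWithinAt)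
    (fun q' hq' ↦ (hr_ball _ (hmem q' hq')).2)).trans_eq ?_
  ring

end UniformVanishing

/-! ### The totally real subspace `{(z, z̄)}` -/

theorem tendsto_ofReal_nhdsGT_zero : Tendsto ((↑) : ℝ → ℂ) (𝓝[>] 0) (𝓝[≠] 0) := by
  refine tendsto_nhdsWithin_iff.2 ⟨?_, ?_⟩
  · exact (Complex.continuous_ofReal.tendsto' 0 0 Complex.ofReal_zero).mono_left nhdsWithin_le_nhds
  · filter_upwards [self_mem_nhdsWithin] with t ht
    exact Complex.ofReal_ne_zero.2 (ne_of_gt ht)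

section RealPoints

variable {V F : Type*} [NormedAddCommGroup V] [NormedSpace ℂ V] [StarAddMonoid V]
  [NormedStarGroup V] [StarModule ℂ V] [NormedAddCommGroup F] [NormedSpace ℂ F]

theorem exists_eq_conj_pair_add_I_smul_conj_pair (q : V × V) :
    ∃ x y : V, ‖x‖ ≤ ‖q‖ ∧ ‖y‖ ≤ ‖q‖ ∧ q = (x, star x) + Complex.I • (y, star y) := by
  have hfst : ‖q.1‖ ≤ ‖q‖ := norm_fst_le q
  have hsnd : ‖star q.2‖ ≤ ‖q‖ := (norm_star q.2).trans_le (norm_snd_le q)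
  refine ⟨(1 / 2 : ℂ) • (q.1 + star q.2), (-Complex.I / 2) • (q.1 - star q.2), ?_, ?_, ?_⟩
  · have hnorm : ‖(1 / 2 : ℂ)‖ = 1 / 2 := by norm_num
    rw [norm_smul, hnorm]
    linarith [norm_add_le q.1 (star q.2)]
  · have hnorm : ‖-Complex.I / 2‖ = 1 / 2 := by simp
    rw [norm_smul, hnorm]
    linarith [norm_sub_le q.1 (star q.2)]
  · have hI : Complex.I * (-Complex.I / 2) = 1 / 2 := by
      linear_combination -(1 / 2 : ℂ) * Complex.I_sq
    have hI' : Complex.I * (Complex.I / 2) = -(1 / 2) := by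
      linear_combination (1 / 2 : ℂ) * Complex.I_sq
    ext
    · simp only [Prod.fst_add, Prod.smul_fst, smul_smul, hI]
      module
    · simp only [Prod.snd_add, Prod.smul_snd, star_smul, star_add, star_sub, star_star, star_div₀,
        star_neg, star_one, star_ofNat, RCLike.star_def, Complex.conj_I, neg_neg, smul_smul, hI']
      module

/-- Along the complex line `t ↦ (x, x̄) + t (y, ȳ)` the function vanishes for real `t`, hence also
for `t = i`, and every point of `V × V` is reached in this way. -/
theorem eventuallyEq_zero_of_eventually_conj_pair_eq_zero [CompleteSpace F] {φ : V × V → F}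
    (hφ : AnalyticAt ℂ φ 0) (h0 : ∀ᶠ z in 𝓝 (0 : V), φ (z, star z) = 0) : φ =ᶠ[𝓝 0] 0 := by
  obtain ⟨r₁, hr₁, han⟩ := eventually_nhds_iff_ball.1 hφ.eventually_analyticAt
  obtain ⟨r₂, hr₂, hzero⟩ := eventually_nhds_iff_ball.1 h0
  obtain ⟨r, hr, hrr₁, hrr₂⟩ : ∃ r > 0, r ≤ r₁ ∧ r ≤ r₂ :=
    ⟨min r₁ r₂, lt_min hr₁ hr₂, min_le_left _ _, min_le_right _ _⟩
  filter_upwards [ball_mem_nhds 0 (show 0 < r / 3 by positivity)] with q hq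
  rw [mem_ball_zero_iff] at hq
  obtain ⟨x, y, hx, hy, hq_eq⟩ := exists_eq_conj_pair_add_I_smul_conj_pair q
  have hmem : ∀ t ∈ ball (0 : ℂ) 2, (x, star x) + t • (y, star y) ∈ ball (0 : V × V) r := by
    intro t ht
    rw [mem_ball_zero_iff] at ht ⊢
    have hbound : ‖(x, star x) + t • (y, star y)‖ ≤ ‖x‖ + ‖t‖ * ‖y‖ := by
      refine (norm_add_le _ _).trans_eq ?_
      rw [norm_smul]
      simp [Prod.norm_def]
    have : ‖t‖ * ‖y‖ ≤ 2 * ‖q‖ := mul_le_mul ht.le hy (norm_nonneg _) zero_le_two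
    linarith
  have hline : AnalyticOnNhd ℂ (fun t : ℂ ↦ φ ((x, star x) + t • (y, star y))) (ball 0 2) :=
    fun t ht ↦ (han _ (ball_subset_ball hrr₁ (hmem t ht))).comp_of_eq
      (f := fun t ↦ (x, star x) + t • (y, star y)) (by fun_prop) rfl
  have hreal : ∀ᶠ t : ℝ in 𝓝[>] 0, φ ((x, star x) + (t : ℂ) • (y, star y)) = 0 := by
    filter_upwards [Ioo_mem_nhdsGT zero_lt_two] with t ht
    have hpair : (x, star x) + (t : ℂ) • (y, star y) =
        (x + (t : ℂ) • y, star (x + (t : ℂ) • y)) := by simp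
    have ht_mem := hmem t (by simpa [abs_of_pos ht.1] using ht.2)
    rw [hpair, mem_ball_zero_iff] at ht_mem
    rw [hpair]
    exact hzero _ (mem_ball_zero_iff.2 ((norm_fst_le _).trans_lt (ht_mem.trans_le hrr₂)))
  rw [hq_eq]
  exact hline.eqOn_zero_of_preconnected_of_frequently_eq_zero (convex_ball _ _).isPreconnected
    (mem_ball_self zero_lt_two) (tendsto_ofReal_nhdsGT_zero.frequently hreal.frequently)
    (show Complex.I ∈ ball (0 : ℂ) 2 by simp)

theorem eventually_le_analyticOrderAt_of_eventually_conj_pair [CompleteSpace F]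
    {f : ℂ × V × V → F} (hf : AnalyticAt ℂ f 0) {k : ℕ}
    (h : ∀ᶠ z in 𝓝 (0 : V), (k : ℕ∞) ≤ analyticOrderAt (fun t ↦ f (t, z, star z)) 0) :
    ∀ᶠ q in 𝓝 (0 : V × V), (k : ℕ∞) ≤ analyticOrderAt (fun t ↦ f (t, q)) 0 := by
  have hslice : ∀ᶠ q in 𝓝 (0 : V × V), AnalyticAt ℂ (fun t ↦ f (t, q)) 0 :=
    ((Continuous.prodMk_right (0 : ℂ)).tendsto (0 : V × V)).eventually hf.eventually_analyticAt
      |>.mono fun q hq ↦ analyticAt_slice_fst hq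
  have hpair : Tendsto (fun z : V ↦ (z, star z)) (𝓝 0) (𝓝 0) :=
    (continuous_id.prodMk continuous_star).tendsto' 0 0 (by simp)
  have hcoeff : ∀ i < k, ∀ᶠ q in 𝓝 (0 : V × V), iteratedDeriv i (fun t ↦ f (t, q)) 0 = 0 := by
    intro i hi
    refine eventuallyEq_zero_of_eventually_conj_pair_eq_zero
      (analyticAt_slice_snd (analyticAt_iteratedDeriv_slice_fst hf i)) ?_
    filter_upwards [h, hpair.eventually hslice] with z hz hz_an
    exact (natCast_le_analyticOrderAt_iff_iteratedDeriv_eq_zero hz_an).1 hz i hi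
  filter_upwards [hslice, (finite_lt_nat k).eventually_all.2 hcoeff] with q hq_an hq
  exact (natCast_le_analyticOrderAt_iff_iteratedDeriv_eq_zero hq_an).2 hq

end RealPoints

/-! ### Dilations and isolated critical points -/

/-- A multiplicative family `T t` of linear maps of a complex vector space that depends
holomorphically on `t` and contracts at least as fast as the scalar `t`, as the weighted
dilations `(z₁, …, zₙ) ↦ (t ^ w₁ z₁, …, t ^ wₙ zₙ)` with positive integral weights do. -/
structure IsDilation {E : Type*} [NormedAddCommGroup E] [NormedSpace ℂ E]
    (T : ℂ →* (E →L[ℂ] E)) : Prop where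
  analyticAt (x : ℂ × E) : AnalyticAt ℂ (fun x : ℂ × E ↦ T x.1 x.2) x
  norm_apply_le (t : ℂ) (q : E) (ht : ‖t‖ ≤ 1) : ‖T t q‖ ≤ ‖t‖ * ‖q‖

section Dilation

variable {E F : Type*} [NormedAddCommGroup E] [NormedSpace ℂ E] [NormedAddCommGroup F]
  [NormedSpace ℂ F] {T : ℂ →* (E →L[ℂ] E)}

theorem monoidHom_ofReal_inv_apply_apply (T : ℂ →* (E →L[ℂ] E)) {s : ℝ} (hs : s ≠ 0) (p : E) :
    T (s⁻¹ : ℝ) (T s p) = p := by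
  rw [← mul_apply_eq_comp, ← map_mul, ← Complex.ofReal_mul, inv_mul_cancel₀ hs,
    Complex.ofReal_one, map_one, one_apply_eq_self]

namespace IsDilation

theorem continuous_ofReal_apply (hT : IsDilation T) (p : E) : Continuous fun s : ℝ ↦ T s p :=
  (continuous_iff_continuousAt.2 fun x ↦ (hT.analyticAt x).continuousAt).comp
    (Complex.continuous_ofReal.prodMk continuous_const)

theorem mul_norm_le_norm_apply (hT : IsDilation T) {s : ℝ} (hs : 1 ≤ s) (p : E) :
    s * ‖p‖ ≤ ‖T s p‖ := by
  have hs0 : 0 < s := zero_lt_one.trans_le hs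
  have hnorm : ‖((s⁻¹ : ℝ) : ℂ)‖ = s⁻¹ := by
    rw [Complex.norm_real, Real.norm_of_nonneg (inv_nonneg.2 hs0.le)]
  have hle := hT.norm_apply_le (s⁻¹ : ℝ) (T s p) (hnorm.trans_le (inv_le_one_of_one_le₀ hs))
  rw [monoidHom_ofReal_inv_apply_apply T hs0.ne', hnorm] at hle
  rwa [← le_inv_mul_iff₀ hs0]

theorem eventually_exists_apply_eq (hT : IsDilation T) {ρ ε : ℝ} (hρ : 0 < ρ) (hε : 0 < ε) :
    ∀ᶠ p in 𝓝 (0 : E), p ≠ 0 → ∃ t : ℝ, 0 < t ∧ t < ε ∧ ∃ q, ‖q‖ = ρ ∧ T t q = p := by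
  obtain ⟨s₀, hs₀, hs₀ε⟩ : ∃ s₀ : ℝ, 1 ≤ s₀ ∧ ε⁻¹ < s₀ :=
    ⟨ε⁻¹ + 1, by linarith [inv_pos.2 hε], lt_add_one _⟩
  have hsmall : ∀ᶠ p in 𝓝 (0 : E), ‖T s₀ p‖ < ρ :=
    (T (s₀ : ℂ)).continuous.norm.continuousAt.eventually_lt_const (by simpa using hρ)
  filter_upwards [hsmall] with p hp hp0
  have hp_pos : 0 < ‖p‖ := norm_pos_iff.2 hp0
  have hs₁ : s₀ ≤ s₀ + ρ / ‖p‖ := le_add_of_nonneg_right (by positivity)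
  have hlarge : ρ ≤ ‖T ((s₀ + ρ / ‖p‖ : ℝ) : ℂ) p‖ := by
    refine le_trans ?_ (hT.mul_norm_le_norm_apply (hs₀.trans hs₁) p)
    rw [add_mul, div_mul_cancel₀ _ hp_pos.ne']
    exact le_add_of_nonneg_left (by positivity)
  obtain ⟨s, hs, hsρ⟩ := intermediate_value_Icc hs₁
    (hT.continuous_ofReal_apply p).norm.continuousOn ⟨hp.le, hlarge⟩
  have hs_pos : 0 < s := zero_lt_one.trans_le (hs₀.trans hs.1)
  refine ⟨s⁻¹, inv_pos.2 hs_pos, inv_lt_of_inv_lt₀ hε (hs₀ε.trans_le hs.1), T s p, hsρ,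
    monoidHom_ofReal_inv_apply_apply T hs_pos.ne' p⟩

theorem map_zero_apply (hT : IsDilation T) (q : E) : T 0 q = 0 := by
  simpa using hT.norm_apply_le 0 q (by simp)

theorem analyticAt_comp (hT : IsDilation T) {f : E → F} (hf : AnalyticAt ℂ f 0) (q : E) :
    AnalyticAt ℂ (fun x : ℂ × E ↦ f (T x.1 x.2)) (0, q) :=
  hf.comp_of_eq (hT.analyticAt (0, q)) (hT.map_zero_apply q)

theorem isBigO_fderiv_comp [CompleteSpace F] (hT : IsDilation T) {g : E → F}
    (hg : AnalyticAt ℂ g 0) {d : ℕ}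
    (hord : ∀ᶠ q in 𝓝 (0 : E), ((d + 1 : ℕ) : ℕ∞) ≤ analyticOrderAt (fun t ↦ g (T t q)) 0) :
    (fun x : ℂ × E ↦ fderiv ℂ (fun q ↦ g (T x.1 q)) x.2) =O[𝓝 0] fun x ↦ x.1 ^ (d + 1) :=
  isBigO_fderiv_slice_snd (φ := (· ^ (d + 1))) (hT.analyticAt_comp hg 0)
    (isBigO_pow_fst_of_eventually_succ_le_analyticOrderAt (hT.analyticAt_comp hg 0) hord)

end IsDilation

theorem fderiv_sub_comp_eq_neg_smul_fderiv {f P : E → F} {L : E →L[ℂ] E} {c : ℂ} {q : E}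
    (hPL : ∀ x, P (L x) = c • P x) (hP : DifferentiableAt ℂ P q)
    (hf : HasFDerivAt f (0 : E →L[ℂ] F) (L q)) :
    fderiv ℂ (fun x ↦ (f - P) (L x)) q = -(c • fderiv ℂ P q) := by
  have hfL : HasFDerivAt (fun x ↦ f (L x)) (0 : E →L[ℂ] F) q := by
    simpa [Function.comp_def] using hf.comp q L.hasFDerivAt
  have hsub : (fun x ↦ (f - P) (L x)) = (fun x ↦ f (L x)) - c • P := by
    ext x
    simp [hPL]
  rw [hsub, (hfL.sub (hP.hasFDerivAt.const_smul c)).fderiv, zero_sub]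

theorem exists_sphere_forall_le_norm_fderiv [FiniteDimensional ℂ E] [CompleteSpace F] {P : E → F}
    (hP : AnalyticAt ℂ P 0) (hcrit : ∀ᶠ q in 𝓝 0, fderiv ℂ P q = 0 → q = 0) {s : Set E}
    (hs : s ∈ 𝓝 0) :
    ∃ ρ > 0, sphere 0 ρ ⊆ s ∧ ∃ c > 0, ∀ q ∈ sphere (0 : E) ρ, c ≤ ‖fderiv ℂ P q‖ := by
  have := FiniteDimensional.proper ℂ E
  obtain ⟨ρ, hρ, hball⟩ := nhds_basis_closedBall.eventually_iff.1
    ((hP.eventually_analyticAt.and hcrit).and hs)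
  have hsphere := sphere_subset_closedBall (x := (0 : E)) (ε := ρ)
  have hcont : ContinuousOn (fun q ↦ ‖fderiv ℂ P q‖) (sphere 0 ρ) := fun q hq ↦
    (hball (hsphere hq)).1.1.fderiv.continuousAt.norm.continuousWithinAt
  have hpos : ∀ q ∈ sphere (0 : E) ρ, 0 < ‖fderiv ℂ P q‖ := fun q hq ↦
    norm_pos_iff.2 fun h ↦ ne_zero_of_mem_sphere hρ.ne' ⟨q, hq⟩ ((hball (hsphere hq)).1.2 h)
  obtain ⟨c, hc, hle⟩ := (isCompact_sphere 0 ρ).exists_forall_le' hcont hpos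
  exact ⟨ρ, hρ, fun q hq ↦ (hball (hsphere hq)).2, c, hc, hle⟩

/-- At a critical point `T t q` of `f`, homogeneity turns `df = 0` into
`t ^ d • dP(q) = O(t ^ (d + 1))`, which bounds `‖dP(q)‖` by a multiple of `t`. -/
theorem IsDilation.eventually_eq_zero_of_fderiv_eq_zero [FiniteDimensional ℂ E] [CompleteSpace F]
    (hT : IsDilation T) {f P : E → F} {d : ℕ} (hf : AnalyticAt ℂ f 0) (hP : AnalyticAt ℂ P 0)
    (hhom : ∀ t q, P (T t q) = t ^ d • P q) (hcrit : ∀ᶠ q in 𝓝 0, fderiv ℂ P q = 0 → q = 0)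
    (hord : ∀ᶠ q in 𝓝 (0 : E),
      ((d + 1 : ℕ) : ℕ∞) ≤ analyticOrderAt (fun t ↦ (f - P) (T t q)) 0) :
    ∀ᶠ p in 𝓝 (0 : E), fderiv ℂ f p = 0 → p = 0 := by
  obtain ⟨K, hK, hbound⟩ := (hT.isBigO_fderiv_comp (hf.sub hP) hord).exists_pos
  obtain ⟨r, hr, hr_ball⟩ := eventually_nhds_iff_ball.1 hbound.bound
  obtain ⟨ρ, hρ, hsphere, c, hc, hle⟩ := exists_sphere_forall_le_norm_fderiv hP hcrit
    (inter_mem (ball_mem_nhds 0 hr) hP.eventually_analyticAt)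
  filter_upwards [hT.eventually_exists_apply_eq hρ (lt_min hr (div_pos hc hK)),
    hf.eventually_analyticAt] with p hpolar hfp hcrit_p
  by_contra hp0
  obtain ⟨t, ht, htε, q, hq, rfl⟩ := hpolar hp0
  obtain ⟨htr, htc⟩ := lt_min_iff.1 htε
  have ht_norm : ‖(t : ℂ)‖ = t := by rw [Complex.norm_real, Real.norm_of_nonneg ht.le]
  have hq_mem : q ∈ sphere 0 ρ := mem_sphere_zero_iff_norm.2 hq
  have hzero := hfp.differentiableAt.hasFDerivAt
  rw [hcrit_p] at hzero
  have hle_pow : t ^ d * ‖fderiv ℂ P q‖ ≤ t ^ d * (K * t) := by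
    have hq_r := mem_ball_zero_iff.1 (hsphere hq_mem).1
    have hle_tq := hr_ball ((t : ℂ), q)
      (by simpa [Prod.norm_def, abs_of_pos ht] using ⟨htr, hq_r⟩)
    rw [fderiv_sub_comp_eq_neg_smul_fderiv (hhom t) (hsphere hq_mem).2.differentiableAt hzero,
      norm_neg, norm_smul, norm_pow, norm_pow, ht_norm] at hle_tq
    exact hle_tq.trans_eq (by ring)
  have hle_t : c ≤ K * t := (hle q hq_mem).trans (le_of_mul_le_mul_left hle_pow (pow_pos ht d))
  rw [lt_div_iff₀ hK] at htc
  linarith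

end Dilation

/-! ### Weighted dilations and quasihomogeneous polynomials -/

section Weighted

variable {σ : Type*}

/-- The weighted dilation `(zᵢ) ↦ (t ^ wᵢ zᵢ)` of `ℂ^σ`, as a multiplicative family in `t`. -/
noncomputable def weightedDilation (w : σ → ℕ) : ℂ →* ((σ → ℂ) →L[ℂ] (σ → ℂ)) where
  toFun t := .pi fun i ↦ t ^ w i • .proj i
  map_one' := by ext; simp
  map_mul' s t := by ext; simp [mul_pow, mul_assoc]

@[simp]
theorem weightedDilation_apply (w : σ → ℕ) (t : ℂ) (z : σ → ℂ) (i : σ) :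
    weightedDilation w t z i = t ^ w i * z i :=
  rfl

/-- The diagonal action on pairs of a multiplicative family of linear maps; it extends a dilation
of `ℂ^σ` to the space of pairs `(z, w)` on which complexifications live. -/
noncomputable def pairDilation {E : Type*} [NormedAddCommGroup E] [NormedSpace ℂ E]
    (T : ℂ →* (E →L[ℂ] E)) : ℂ →* (E × E →L[ℂ] E × E) where
  toFun t := (T t).prodMap (T t)
  map_one' := by ext <;> simp
  map_mul' s t := by ext <;> simp

@[simp]
theorem pairDilation_apply {E : Type*} [NormedAddCommGroup E] [NormedSpace ℂ E]
    (T : ℂ →* (E →L[ℂ] E)) (t : ℂ) (q : E × E) : pairDilation T t q = (T t q.1, T t q.2) :=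
  rfl

theorem isDilation_weightedDilation [Fintype σ] {w : σ → ℕ} (hw : ∀ i, 0 < w i) :
    IsDilation (weightedDilation w) where
  analyticAt x := by
    have hproj (i : σ) : AnalyticAt ℂ (fun x : ℂ × (σ → ℂ) ↦ x.2 i) x :=
      ((ContinuousLinearMap.proj i).comp (.snd ℂ ℂ (σ → ℂ))).analyticAt x
    exact analyticAt_pi_iff.2 fun i ↦ (analyticAt_fst.pow (w i)).mul (hproj i)
  norm_apply_le t z ht := by
    refine (pi_norm_le_iff_of_nonneg (by positivity)).2 fun i ↦ ?_
    rw [weightedDilation_apply, norm_mul, norm_pow]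
    gcongr
    · exact pow_le_of_le_one (norm_nonneg t) ht (hw i).ne'
    · exact norm_le_pi_norm z i

theorem IsDilation.pairDilation {E : Type*} [NormedAddCommGroup E] [NormedSpace ℂ E]
    {T : ℂ →* (E →L[ℂ] E)} (hT : IsDilation T) : IsDilation (pairDilation T) where
  analyticAt x :=
    ((hT.analyticAt (x.1, x.2.1)).comp_of_eq (f := fun x : ℂ × E × E ↦ (x.1, x.2.1))
      (analyticAt_fst.prod (analyticAt_fst.comp analyticAt_snd)) rfl).prod
    ((hT.analyticAt (x.1, x.2.2)).comp_of_eq (f := fun x : ℂ × E × E ↦ (x.1, x.2.2))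
      (analyticAt_fst.prod (analyticAt_snd.comp analyticAt_snd)) rfl)
  norm_apply_le t q ht := by
    rw [pairDilation_apply, Prod.norm_mk]
    refine max_le ((hT.norm_apply_le t q.1 ht).trans ?_) ((hT.norm_apply_le t q.2 ht).trans ?_)
    · gcongr
      exact norm_fst_le q
    · gcongr
      exact norm_snd_le q

theorem eval_weightedDilation {w : σ → ℕ} {d : ℕ} {Q : MvPolynomial σ ℂ}
    (hQ : Q.IsWeightedHomogeneous w d) (t : ℂ) (z : σ → ℂ) :
    MvPolynomial.eval (weightedDilation w t z) Q = t ^ d * MvPolynomial.eval z Q := by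
  rw [MvPolynomial.eval_eq, MvPolynomial.eval_eq, Finset.mul_sum]
  refine Finset.sum_congr rfl fun m hm ↦ ?_
  have hweight : t ^ d = ∏ i ∈ m.support, (t ^ w i) ^ m i := by
    rw [← hQ (MvPolynomial.mem_support_iff.1 hm), Finsupp.weight_apply, Finsupp.sum,
      ← Finset.prod_pow_eq_pow_sum]
    simp only [smul_eq_mul, mul_comm (m _), pow_mul]
  simp only [weightedDilation_apply, mul_pow, Finset.prod_mul_distrib, hweight]
  ring

end Weighted

section Polynomial

open MvPolynomial

variable {σ : Type*}

theorem eval_map_conj (Q : MvPolynomial σ ℂ) (z : σ → ℂ) :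
    eval z (map (starRingEnd ℂ) Q) = starRingEnd ℂ (eval (star z) Q) := by
  rw [eval_map, ← eval₂_id, hom_eval₂]
  congr 1
  ext i
  simp

/-- The holomorphic function `(Q(z) + Q̄(w)) / 2` of `(z, w)`, where `Q̄` has the conjugate
coefficients; its restriction to `w = z̄` is `Re Q`. -/
noncomputable def complexifyRe (Q : MvPolynomial σ ℂ) (q : (σ → ℂ) × (σ → ℂ)) : ℂ :=
  (eval q.1 Q + eval q.2 (map (starRingEnd ℂ) Q)) / 2

theorem complexifyRe_conj_pair (Q : MvPolynomial σ ℂ) (z : σ → ℂ) :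
    complexifyRe Q (z, star z) = ((eval z Q).re : ℂ) := by
  rw [complexifyRe, eval_map_conj, star_star, Complex.re_eq_add_conj]

theorem complexifyRe_pairDilation [Fintype σ] {w : σ → ℕ} {d : ℕ} {Q : MvPolynomial σ ℂ}
    (hQ : Q.IsWeightedHomogeneous w d) (t : ℂ) (q : (σ → ℂ) × (σ → ℂ)) :
    complexifyRe Q (pairDilation (weightedDilation w) t q) = t ^ d • complexifyRe Q q := by
  have hQ_conj : (map (starRingEnd ℂ) Q).IsWeightedHomogeneous w d := fun m hm ↦
    hQ fun h0 ↦ hm (by rw [coeff_map, h0, map_zero])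
  rw [complexifyRe, pairDilation_apply, eval_weightedDilation hQ, eval_weightedDilation hQ_conj,
    complexifyRe, smul_eq_mul]
  ring

theorem analyticAt_complexifyRe [Fintype σ] (Q : MvPolynomial σ ℂ) (q : (σ → ℂ) × (σ → ℂ)) :
    AnalyticAt ℂ (complexifyRe Q) q :=
  ((AnalyticAt.fun_comp (f := Prod.fst) (AnalyticOnNhd.eval_mvPolynomial Q q.1 trivial)
    analyticAt_fst).add (AnalyticAt.fun_comp (f := Prod.snd)
      (AnalyticOnNhd.eval_mvPolynomial _ q.2 trivial) analyticAt_snd)).div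
    analyticAt_const two_ne_zero

theorem hasFDerivAt_eval [Fintype σ] {𝕜 : Type*} [NontriviallyNormedField 𝕜]
    (Q : MvPolynomial σ 𝕜) (z : σ → 𝕜) :
    HasFDerivAt (fun z ↦ eval z Q)
      (∑ i, eval z (pderiv i Q) • (ContinuousLinearMap.proj i : (σ → 𝕜) →L[𝕜] 𝕜)) z := by
  classical
  induction Q using MvPolynomial.induction_on with
  | C c =>
    simp only [eval_C]
    refine (hasFDerivAt_const c z).congr_fderiv ?_
    ext v
    simp
  | add p q hp hq =>
    simp only [map_add]
    refine (hp.fun_add hq).congr_fderiv ?_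
    ext v
    simp [add_mul, Finset.sum_add_distrib]
  | mul_X p j hp =>
    have hX : HasFDerivAt (fun z : σ → 𝕜 ↦ z j) (.proj j : (σ → 𝕜) →L[𝕜] 𝕜) z :=
      hasFDerivAt_apply j z
    simp only [map_mul, eval_X]
    refine (hp.fun_mul hX).congr_fderiv ?_
    ext v
    simp [Derivation.leibniz, pderiv_X, Pi.single_apply, add_mul, Finset.sum_add_distrib,
      Finset.mul_sum, mul_assoc, apply_ite (eval z)]

variable [Finite σ]

theorem fderiv_eval_single [DecidableEq σ] {𝕜 : Type*} [NontriviallyNormedField 𝕜]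
    (Q : MvPolynomial σ 𝕜) (z : σ → 𝕜) (i : σ) :
    fderiv 𝕜 (fun z ↦ eval z Q) z (Pi.single i 1) = eval z (pderiv i Q) := by
  cases nonempty_fintype σ
  simp [(hasFDerivAt_eval Q z).fderiv, Pi.single_apply]

theorem fderiv_complexifyRe_apply (Q : MvPolynomial σ ℂ) (q v : (σ → ℂ) × (σ → ℂ)) :
    fderiv ℂ (complexifyRe Q) q v = 2⁻¹ * (fderiv ℂ (fun z ↦ eval z Q) q.1 v.1 +
      fderiv ℂ (fun z ↦ eval z (map (starRingEnd ℂ) Q)) q.2 v.2) := by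
  cases nonempty_fintype σ
  have hfst := (hasFDerivAt_eval Q q.1).differentiableAt.hasFDerivAt.comp q hasFDerivAt_fst
  have hsnd := (hasFDerivAt_eval (map (starRingEnd ℂ) Q) q.2).differentiableAt.hasFDerivAt.comp q
    hasFDerivAt_snd
  have hP : HasFDerivAt (complexifyRe Q) _ q := (hfst.add hsnd).mul_const (2⁻¹ : ℂ)
  rw [hP.fderiv]
  rfl

theorem eval_pderiv_eq_zero_of_fderiv_complexifyRe_eq_zero {Q : MvPolynomial σ ℂ}
    {q : (σ → ℂ) × (σ → ℂ)} (h : fderiv ℂ (complexifyRe Q) q = 0) (i : σ) :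
    eval q.1 (pderiv i Q) = 0 ∧ eval (star q.2) (pderiv i Q) = 0 := by
  classical
  have hfst := fderiv_complexifyRe_apply Q q (Pi.single i 1, 0)
  have hsnd := fderiv_complexifyRe_apply Q q (0, Pi.single i 1)
  rw [h, fderiv_eval_single] at hfst
  rw [h, fderiv_eval_single, pderiv_map, eval_map_conj] at hsnd
  exact ⟨by simpa using hfst.symm, by simpa using hsnd.symm⟩

theorem eventually_eq_zero_of_fderiv_complexifyRe_eq_zero {Q : MvPolynomial σ ℂ}
    (hQ : ∀ᶠ z in 𝓝 (0 : σ → ℂ), (∀ i, eval z (pderiv i Q) = 0) → z = 0) :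
    ∀ᶠ q in 𝓝 0, fderiv ℂ (complexifyRe Q) q = 0 → q = 0 := by
  have hfst : Tendsto (Prod.fst : (σ → ℂ) × (σ → ℂ) → σ → ℂ) (𝓝 0) (𝓝 0) :=
    continuous_fst.tendsto' _ _ rfl
  have hsnd : Tendsto (fun q : (σ → ℂ) × (σ → ℂ) ↦ star q.2) (𝓝 0) (𝓝 0) :=
    continuous_snd.star.tendsto' _ _ (star_zero _)
  filter_upwards [hfst.eventually hQ, hsnd.eventually hQ] with q hq₁ hq₂ hq
  have hcrit := eval_pderiv_eq_zero_of_fderiv_complexifyRe_eq_zero hq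
  exact Prod.ext (hq₁ fun i ↦ (hcrit i).1) (star_eq_zero.1 (hq₂ fun i ↦ (hcrit i).2))

theorem isWeightedHomogeneous_fin_two {R : Type*} [CommSemiring R] {a b d : ℕ}
    {Q : MvPolynomial (Fin 2) R} (hQ : ∀ m ∈ Q.support, a * m 0 + b * m 1 = d) :
    Q.IsWeightedHomogeneous (fun i ↦ if i = 0 then a else b) d := by
  intro m hm
  rw [← hQ m (mem_support_iff.2 hm), Finsupp.weight_eq_sum]
  simp [mul_comm]

end Polynomial

/-! ### Complexifications -/

namespace IsComplexification

variable {n : ℕ} {F : (Fin n → ℂ) → ℝ} {FC : (Fin n → ℂ) × (Fin n → ℂ) → ℂ}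

theorem apply_zero (h : IsComplexification F FC) : FC 0 = F 0 := by
  have h0 := h.2.self_of_nhds
  rwa [star_zero] at h0

theorem sub_complexifyRe (h : IsComplexification F FC) {Q : MvPolynomial (Fin n) ℂ}
    {H : (Fin n → ℂ) → ℝ} (hF : ∀ᶠ z in 𝓝 0, F z = (MvPolynomial.eval z Q).re + H z) :
    IsComplexification H (FC - complexifyRe Q) := by
  refine ⟨h.1.sub (analyticAt_complexifyRe Q 0), ?_⟩
  filter_upwards [h.2, hF] with z hz hFz
  rw [Pi.sub_apply, hz, complexifyRe_conj_pair, hFz, Complex.ofReal_add, add_sub_cancel_left]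

theorem fderiv_apply_conj_pair (h : IsComplexification F FC) (hF : fderiv ℝ F 0 = 0)
    (z : Fin n → ℂ) : fderiv ℂ FC 0 (z, star z) = 0 := by
  let J : (Fin n → ℂ) →L[ℝ] (Fin n → ℂ) × (Fin n → ℂ) :=
    (ContinuousLinearMap.id ℝ _).prod (starL' ℝ (A := Fin n → ℂ)).toContinuousLinearMap
  have hFC : HasFDerivAt FC (fderiv ℂ FC 0) (J 0) := by
    simpa only [map_zero] using h.1.differentiableAt.hasFDerivAt
  have hFCJ : HasFDerivAt (fun z ↦ FC (J z)) (((fderiv ℂ FC 0).restrictScalars ℝ).comp J) 0 :=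
    (hFC.restrictScalars ℝ).comp 0 J.hasFDerivAt
  have hF_diff : DifferentiableAt ℝ F 0 := by
    refine (Complex.reCLM.differentiableAt.comp 0 hFCJ.differentiableAt).congr_of_eventuallyEq ?_
    filter_upwards [h.2] with z hz
    exact (congrArg Complex.re hz).symm
  have hFderiv : HasFDerivAt (fun z ↦ (F z : ℂ)) (Complex.ofRealCLM.comp (fderiv ℝ F 0)) 0 :=
    Complex.ofRealCLM.hasFDerivAt.comp 0 hF_diff.hasFDerivAt
  have heq := hFCJ.unique (hFderiv.congr_of_eventuallyEq h.2)
  rw [hF, ContinuousLinearMap.comp_zero] at heq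
  exact DFunLike.congr_fun heq z

theorem fderiv_zero (h : IsComplexification F FC) (hF : fderiv ℝ F 0 = 0) :
    fderiv ℂ FC 0 = 0 := by
  refine ContinuousLinearMap.ext fun q ↦ ?_
  obtain ⟨x, y, -, -, rfl⟩ := exists_eq_conj_pair_add_I_smul_conj_pair q
  rw [map_add, map_smul, h.fderiv_apply_conj_pair hF, h.fderiv_apply_conj_pair hF, smul_zero,
    add_zero, zero_apply]

theorem eventually_succ_le_analyticOrderAt_pairDilation (h : IsComplexification F FC)
    {w : Fin n → ℕ} (hw : ∀ i, 0 < w i) {d : ℕ}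
    (hF : ∀ᶠ z in 𝓝 0,
      Tendsto (fun t : ℝ ↦ F (weightedDilation w t z) / t ^ d) (𝓝[>] 0) (𝓝 0)) :
    ∀ᶠ q in 𝓝 0, ((d + 1 : ℕ) : ℕ∞) ≤
      analyticOrderAt (fun t ↦ FC (pairDilation (weightedDilation w) t q)) 0 := by
  have hT := isDilation_weightedDilation hw
  have han := hT.pairDilation.analyticAt_comp h.1
  refine eventually_le_analyticOrderAt_of_eventually_conj_pair (han 0) ?_
  filter_upwards [hF] with z hz
  refine succ_le_analyticOrderAt_of_isLittleO_pow (analyticAt_slice_fst (han (z, star z)))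
    tendsto_ofReal_nhdsGT_zero (isLittleO_map.2 ?_)
  have hlim : Tendsto (fun t : ℝ ↦ weightedDilation w t z) (𝓝[>] 0) (𝓝 0) :=
    ((hT.continuous_ofReal_apply z).tendsto' 0 0 (hT.map_zero_apply z)).mono_left
      nhdsWithin_le_nhds
  have hlittle : (fun t : ℝ ↦ F (weightedDilation w t z)) =o[𝓝[>] 0] fun t ↦ t ^ d := by
    refine isLittleO_of_tendsto' ?_ hz
    filter_upwards [self_mem_nhdsWithin] with t ht ht0
    exact absurd ht0 (pow_ne_zero d (ne_of_gt ht))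
  have hlittle_ofReal : (fun t : ℝ ↦ (F (weightedDilation w t z) : ℂ)) =o[𝓝[>] 0]
      fun t ↦ (t : ℂ) ^ d := by
    exact_mod_cast Complex.isLittleO_ofReal_left.2 (Complex.isLittleO_ofReal_right.2 hlittle)
  refine hlittle_ofReal.congr' ?_ .rfl
  filter_upwards [hlim.eventually h.2] with t ht
  have hstar : star (weightedDilation w t z) = weightedDilation w t (star z) := by
    ext i
    simp
  rw [← ht, hstar]
  rfl

end IsComplexification

theorem stmt_4_general {n : ℕ} {w : Fin n → ℕ} (hw : ∀ i, 0 < w i) {d : ℕ}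
    {Q : MvPolynomial (Fin n) ℂ} (hQ : Q.IsWeightedHomogeneous w d)
    (hQsing : ∀ᶠ z in 𝓝 (0 : Fin n → ℂ),
      (∀ i, MvPolynomial.eval z (MvPolynomial.pderiv i Q) = 0) → z = 0)
    {F H : (Fin n → ℂ) → ℝ}
    (hFeq : ∀ᶠ z in 𝓝 (0 : Fin n → ℂ), F z = (MvPolynomial.eval z Q).re + H z)
    (hHord : ∀ᶠ z in 𝓝 (0 : Fin n → ℂ),
      Tendsto (fun t : ℝ ↦ H (fun i ↦ (t : ℂ) ^ w i * z i) / t ^ d) (𝓝[>] 0) (𝓝 0))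
    (hF0 : F 0 = 0) (hsing : fderiv ℝ F 0 = 0)
    {FC : (Fin n → ℂ) × (Fin n → ℂ) → ℂ} (hFC : IsComplexification F FC) :
    ∃ U ∈ 𝓝 (0 : (Fin n → ℂ) × (Fin n → ℂ)), singMC FC ∩ U = {0} := by
  have hT := (isDilation_weightedDilation hw).pairDilation
  have hisolated : ∀ᶠ p in 𝓝 0, fderiv ℂ FC p = 0 → p = 0 :=
    hT.eventually_eq_zero_of_fderiv_eq_zero hFC.1 (analyticAt_complexifyRe Q 0)
      (complexifyRe_pairDilation hQ) (eventually_eq_zero_of_fderiv_complexifyRe_eq_zero hQsing)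
      ((hFC.sub_complexifyRe hFeq).eventually_succ_le_analyticOrderAt_pairDilation hw hHord)
  have hmem : (0 : (Fin n → ℂ) × (Fin n → ℂ)) ∈ singMC FC :=
    ⟨by rw [hFC.apply_zero, hF0, Complex.ofReal_zero], hFC.fderiv_zero hsing⟩
  refine ⟨_, hisolated, Subset.antisymm (fun p hp ↦ hp.2 hp.1.2) ?_⟩
  rintro p rfl
  exact ⟨hmem, fun _ ↦ rfl⟩

/-- **Proposition (a).** The algebraic dimension of `Sing(M)` is `0`: near the origin of
`ℂ⁴` the only common zero of `F_ℂ` and `dF_ℂ` is `0`, i.e. `Sing(M_ℂ) = {0}` as a germ. -/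
theorem stmt_4
 (a b d : ℕ) (ha : 0 < a) (hb : 0 < b) (hd : 0 < d) (hab : Nat.gcd a b = 1)
    (Q : MvPolynomial (Fin 2) ℂ)
    -- `Q` is quasihomogeneous of type `(a,b)` and quasihomogeneous degree `d`
    (hQqh : ∀ m ∈ Q.support, a * m 0 + b * m 1 = d)
    -- `Q` has an isolated singularity at `0 ∈ ℂ²`
    (hQcrit : ∀ i, MvPolynomial.eval (0 : Fin 2 → ℂ) (MvPolynomial.pderiv i Q) = 0)
    (hQsing : ∀ᶠ z in 𝓝 (0 : Fin 2 → ℂ),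
      (∀ i, MvPolynomial.eval z (MvPolynomial.pderiv i Q) = 0) → z = 0)
    (F H : (Fin 2 → ℂ) → ℝ)
    (hF : AnalyticAt ℝ F 0) (hH : AnalyticAt ℝ H 0)
    -- `F(z) = Re(Q(z)) + H(z, z̄)`
    (hFeq : ∀ᶠ z in 𝓝 (0 : Fin 2 → ℂ), F z = (MvPolynomial.eval z Q).re + H z)
    -- every monomial `z^μ z̄^ν` of the Taylor series of `H` has weighted degree
    -- `a(μ₁+ν₁) + b(μ₂+ν₂) > d`
    (hHord : ∃ r > (0:ℝ), ∀ z : Fin 2 → ℂ, ‖z‖ < r →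
      Tendsto (fun lam : ℝ => H (fun i => (lam : ℂ) ^ (if i = 0 then a else b) * z i) / lam ^ d)
        (𝓝[>] 0) (𝓝 0))
    -- `M = {F = 0}` is a singular hypersurface at `0`
    (hF0 : F 0 = 0) (hsing : fderiv ℝ F 0 = 0)
    (hirr : IrreducibleRGerm F)
    (hLF : LeviFlatGerm F)
    (FC : ((Fin 2 → ℂ) × (Fin 2 → ℂ)) → ℂ) (hFC : IsComplexification F FC)
    :
    ∃ U ∈ 𝓝 (0 : (Fin 2 → ℂ) × (Fin 2 → ℂ)), singMC FC ∩ U = {0} := by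
  exact stmt_4_general (fun i ↦ by split_ifs <;> assumption) (isWeightedHomogeneous_fin_two hQqh)
    hQsing hFeq (eventually_nhds_iff_ball.2 (by simpa only [mem_ball_zero_iff] using hHord))
    hF0 hsing hFC
end
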